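/- Let (x_i)_{i∈ℕ} be a normalized block sequence of (e_i) and let (k_i) be a strictly increasing sequence in ℕ. Then there exists a subsequence (y_i) of (x_i) with the following property: whenever (s_i) and (t_i) are strictly increasing sequences in ℕ with s_i ≤ k_i and t_i ≤ k_i for all i ∈ ℕ, the sequences (y_{s_i}) and (y_{t_i}) are equivalent. -/

import Mathlib

abbrev c00 : Type := ℕ →₀ ℝ

noncomputable def flog (x : ℝ) : ℝ := Real.logb 2 (x + 1)

noncomputable def supNorm (x : c00) : ℝ := ⨆ i, |x i|

def proj (E : Finset ℕ) (x : c00) : c00 := x.filter (· ∈ E)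

def FLt (A B : Finset ℕ) : Prop := ∀ a ∈ A, ∀ b ∈ B, a < b

def IsNormC00 (N : c00 → ℝ) : Prop :=
  (∀ x, N x = 0 ↔ x = 0) ∧ (∀ x y, N (x + y) ≤ N x + N y) ∧
    ∀ (a : ℝ) (x : c00), N (a • x) = |a| * N x

def schSet (N : c00 → ℝ) (x : c00) : Set ℝ :=
  {s | ∃ n : ℕ, 2 ≤ n ∧ ∃ E : Fin n → Finset ℕ,
    (∀ i j : Fin n, i < j → FLt (E i) (E j)) ∧
    s = (flog n)⁻¹ * ∑ i, N (proj (E i) x)}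

def IsSchlumprechtNorm (N : c00 → ℝ) : Prop :=
  IsNormC00 N ∧ ∀ x : c00, IsLUB (insert (supNorm x) (schSet N x)) (N x)

def IsBlockSeq (x : ℕ → c00) : Prop :=
  (∀ n, x n ≠ 0) ∧ ∀ n, ∀ i ∈ (x n).support, ∀ j ∈ (x (n+1)).support, i < j

def SeqEquiv (N : c00 → ℝ) (u v : ℕ → c00) : Prop :=
  ∃ c : ℝ, 1 ≤ c ∧ ∀ a : ℕ →₀ ℝ,
    (1 / c) * N (a.sum fun i t => t • u i) ≤ N (a.sum fun i t => t • v i) ∧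
    N (a.sum fun i t => t • v i) ≤ c * N (a.sum fun i t => t • u i)
/-!
Write `splitNorm N n x` for the largest value of `∑ N (E x)` over at most `n` successive sets `E`.
For unit vectors it lies between `1` and `flog n`, so by compactness we may assume that
`splitNorm N d (y j)` converges to some `L d` as `j → ∞`, for every `d ≥ 1`. Further thinning makes
it comparable to `L d` for all `d ≤ M i` and `j ≥ i`, with `M` growing as fast as we like.

To bound `∑ a l • y (t l)` by `∑ a l • y (s l)`, take a norming functional of the former and move
it to the latter by induction on its tree structure. At a node with `m` successors, where
`M i < m ≤ M (i + 1)`, the vectors with index `l > i` split equally well in both sequences. Among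
the others, those with `t l < i` have supports negligible against `flog m`. There remain at most
`i + 1` indices, all with `i ≤ t l ≤ k l`. Either `L` is comparable to `flog` somewhere between
`k l` and `M l` for each `l`, and then these few vectors can be split simultaneously, so that both
combinations are comparable to `∑ |a l|`; or `L` is negligible against `flog` beyond `M`, and then
so few vectors gain nothing from splitting.

Vectors cut by several successors of a node increase the number of pieces by a constant factor,
and the losses from this would accumulate over the levels of the tree. Norming functionals are
therefore replaced by slack functionals, in which a node with `n` successors carries the weight
`1 / flog (4 * n)`. They still norm every vector up to a constant. If a vector is best split into
`n` pieces, with `flog n = r ^ 2` large, then pieces that are best split into fewer than about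
`n ^ 2` sets make up only a fraction `O(1 / r)` of the total; along the other pieces `flog n`
doubles, so the losses `O(1 / r)` form a geometric series. Vectors best split into boundedly many
sets cannot dominate at all levels: `d` successive splittings into at most `n₀` sets gain a factor
`(3 / 2) ^ d`, but the `n₀ ^ d` resulting pieces allow for at most `flog (n₀ ^ d)`, which is linear
in `d`.
-/

/-! ### The function `flog` -/

lemma flog_zero : flog 0 = 0 := by simp [flog]

lemma flog_one : flog 1 = 1 := by norm_num [flog]

lemma flog_le_flog {a b : ℝ} (ha : 0 ≤ a) (h : a ≤ b) : flog a ≤ flog b :=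
  Real.logb_le_logb_of_le one_lt_two (by linarith) (by linarith)

lemma flog_nonneg {a : ℝ} (ha : 0 ≤ a) : 0 ≤ flog a :=
  flog_zero.symm.trans_le (flog_le_flog le_rfl ha)

lemma flog_natCast_nonneg (n : ℕ) : 0 ≤ flog n := flog_nonneg n.cast_nonneg

lemma flog_natCast_le_flog {m n : ℕ} (h : m ≤ n) : flog m ≤ flog n :=
  flog_le_flog m.cast_nonneg (Nat.cast_le.2 h)

lemma one_le_flog {n : ℕ} (h : 1 ≤ n) : 1 ≤ flog n :=
  flog_one.symm.trans_le (flog_le_flog zero_le_one (Nat.one_le_cast.2 h))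

lemma two_rpow_flog {a : ℝ} (ha : 0 ≤ a) : (2 : ℝ) ^ flog a = a + 1 :=
  Real.rpow_logb two_pos (by norm_num) (by linarith)

lemma flog_le_iff {a t : ℝ} (ha : 0 ≤ a) : flog a ≤ t ↔ a + 1 ≤ 2 ^ t :=
  Real.logb_le_iff_le_rpow one_lt_two (by linarith)

lemma le_flog_iff {a t : ℝ} (ha : 0 ≤ a) : t ≤ flog a ↔ 2 ^ t ≤ a + 1 :=
  Real.le_logb_iff_rpow_le one_lt_two (by linarith)

lemma three_halves_le_flog {n : ℕ} (h : 2 ≤ n) : 3 / 2 ≤ flog n := by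
  refine le_trans ?_ (flog_natCast_le_flog h)
  rw [le_flog_iff (by positivity), div_eq_inv_mul, Real.rpow_mul two_pos.le,
    ← Real.rpow_le_rpow_iff (by positivity) (by positivity) two_pos,
    ← Real.rpow_mul (by positivity), ← Real.rpow_mul (by positivity)]
  norm_num

lemma flog_two_le_two : flog (2 : ℕ) ≤ 2 := by
  rw [flog_le_iff (by positivity)]; norm_num

lemma flog_mul_le {a b : ℝ} (ha : 0 ≤ a) (hb : 0 ≤ b) : flog (a * b) ≤ flog a + flog b := by
  rw [flog_le_iff (mul_nonneg ha hb), Real.rpow_add two_pos, two_rpow_flog ha, two_rpow_flog hb]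
  linarith

lemma flog_sum_le {ι : Type*} {s : Finset ι} {d : ι → ℕ} {T : ℝ} (hT : 0 ≤ T)
    (h : ∀ i ∈ s, flog (d i) ≤ T) : flog (∑ i ∈ s, d i : ℕ) ≤ flog s.card + T := by
  have hone : (1 : ℝ) ≤ 2 ^ T := Real.one_le_rpow one_le_two hT
  have hd (i) (hi : i ∈ s) : (d i : ℝ) ≤ 2 ^ T := by
    linarith [(flog_le_iff (Nat.cast_nonneg _)).1 (h i hi)]
  rw [flog_le_iff (Nat.cast_nonneg _), Real.rpow_add two_pos, two_rpow_flog (Nat.cast_nonneg _)]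
  have hsum := Finset.sum_le_card_nsmul s _ _ hd
  rw [nsmul_eq_mul] at hsum
  push_cast
  linarith

lemma flog_four_mul_le (n : ℕ) : flog (4 * n : ℕ) ≤ flog n + 3 := by
  have h4 : flog 4 ≤ 3 := by rw [flog_le_iff (by norm_num)]; norm_num
  push_cast
  linarith [flog_mul_le (show (0 : ℝ) ≤ 4 by norm_num) n.cast_nonneg]

lemma le_flog_two_pow (n : ℕ) : n ≤ flog (2 ^ n : ℕ) := by
  rw [le_flog_iff (by positivity), Real.rpow_natCast]
  push_cast; linarith

lemma flog_pow_le (n d : ℕ) : flog (n ^ d : ℕ) ≤ d * flog n + 1 := by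
  induction d with
  | zero => simp [flog_one]
  | succ d ih =>
    have h := flog_mul_le (n ^ d : ℕ).cast_nonneg n.cast_nonneg
    rw [pow_succ]; push_cast at h ih ⊢; linarith

lemma exists_two_mul_flog_pow_le (n : ℕ) : ∃ d : ℕ, 2 * flog (n ^ d : ℕ) ≤ (3 / 2) ^ d := by
  have hone : (1 : ℝ) < 3 / 2 := by norm_num
  have hlin := (tendsto_pow_const_div_const_pow_of_one_lt 1 hone).const_mul (2 * flog n)
  have hconst := (tendsto_pow_const_div_const_pow_of_one_lt 0 hone).const_mul 2
  obtain ⟨d, hd⟩ := ((hlin.add hconst).eventually_le_const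
    (show 2 * flog n * 0 + 2 * 0 < 1 by norm_num)).exists
  have hpos : (0 : ℝ) < (3 / 2) ^ d := by positivity
  rw [← mul_div_assoc, ← mul_div_assoc, ← add_div, div_le_one hpos] at hd
  exact ⟨d, by linarith [flog_pow_le n d, hd, pow_one (d : ℝ), pow_zero (d : ℝ)]⟩

/-! ### Coordinate projections -/

lemma proj_apply (E : Finset ℕ) (x : c00) (i : ℕ) : proj E x i = if i ∈ E then x i else 0 :=
  Finsupp.filter_apply _ _ _

lemma proj_smul (E : Finset ℕ) (a : ℝ) (x : c00) : proj E (a • x) = a • proj E x :=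
  Finsupp.filter_smul

lemma proj_sum {ι : Type*} (E : Finset ℕ) (s : Finset ι) (g : ι → c00) :
    proj E (∑ i ∈ s, g i) = ∑ i ∈ s, proj E (g i) :=
  Finsupp.filter_sum _ _

lemma proj_empty (x : c00) : proj ∅ x = 0 := by
  ext i; simp [proj_apply]

lemma proj_proj (E F : Finset ℕ) (x : c00) : proj E (proj F x) = proj (E ∩ F) x := by
  ext i; simp only [proj_apply, Finset.mem_inter]; split_ifs <;> tauto

lemma proj_proj_of_subset {E F : Finset ℕ} (h : E ⊆ F) (x : c00) :
    proj E (proj F x) = proj E x := by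
  rw [proj_proj, Finset.inter_eq_left.2 h]

lemma support_proj (E : Finset ℕ) (x : c00) : (proj E x).support = x.support ∩ E := by
  rw [proj, Finsupp.support_filter, Finset.filter_mem_eq_inter]

lemma support_proj_of_subset {E : Finset ℕ} {x : c00} (h : E ⊆ x.support) :
    (proj E x).support = E := by
  rw [support_proj, Finset.inter_eq_right.2 h]

lemma proj_eq_self {E : Finset ℕ} {x : c00} (h : x.support ⊆ E) : proj E x = x :=
  (Finsupp.filter_eq_self_iff _ _).2 fun _ hi => h (Finsupp.mem_support_iff.2 hi)

lemma proj_inter_support (E : Finset ℕ) (x : c00) : proj (E ∩ x.support) x = proj E x := by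
  rw [← proj_proj, proj_eq_self subset_rfl]

lemma proj_eq_zero {E : Finset ℕ} {x : c00} (h : Disjoint E x.support) : proj E x = 0 := by
  rw [← proj_inter_support, Finset.disjoint_iff_inter_eq_empty.1 h, proj_empty]

/-! ### Separated families -/

lemma FLt.mono {A B A' B' : Finset ℕ} (h : FLt A B) (hA : A' ⊆ A) (hB : B' ⊆ B) : FLt A' B' :=
  fun a ha b hb => h a (hA ha) b (hB hb)

/-- One of the two sets lies entirely to the left of the other. -/
def Separated (A B : Finset ℕ) : Prop := FLt A B ∨ FLt B A

namespace Separated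

variable {A B A' B' : Finset ℕ}

lemma symm (h : Separated A B) : Separated B A := Or.symm h

lemma mono (h : Separated A B) (hA : A' ⊆ A) (hB : B' ⊆ B) : Separated A' B' :=
  h.imp (·.mono hA hB) (·.mono hB hA)

lemma disjoint (h : Separated A B) : Disjoint A B := by
  refine Finset.disjoint_left.2 fun i hA hB => ?_
  rcases h with h | h
  · exact (h i hA i hB).false
  · exact (h i hB i hA).false

end Separated

/-- The family `(E i)` indexed by `i ∈ s` becomes successive after reindexing. Stating this without
the order of the sets lets families be merged without sorting their index sets. -/
def SeparatedOn {ι : Type*} (s : Finset ι) (E : ι → Finset ℕ) : Prop :=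
  (s : Set ι).Pairwise fun i j => Separated (E i) (E j)

namespace SeparatedOn

variable {ι : Type*} {s t : Finset ι} {E F : ι → Finset ℕ}

lemma mono (h : SeparatedOn s E) (hF : ∀ i ∈ s, F i ⊆ E i) : SeparatedOn s F :=
  fun i hi j hj hij => (h hi hj hij).mono (hF i hi) (hF j hj)

lemma subset (h : SeparatedOn s E) (hts : t ⊆ s) : SeparatedOn t E :=
  Set.Pairwise.mono (Finset.coe_subset.2 hts) h

lemma pairwiseDisjoint (h : SeparatedOn s E) : (s : Set ι).PairwiseDisjoint E :=
  fun _ hi _ hj hij => (h hi hj hij).disjoint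

lemma sigma {κ : ι → Type*} {t : ∀ i, Finset (κ i)} {G : (Σ i, κ i) → Finset ℕ}
    (h : SeparatedOn s E) (ht : ∀ i ∈ s, SeparatedOn (t i) fun j => G ⟨i, j⟩)
    (hsub : ∀ i ∈ s, ∀ j ∈ t i, G ⟨i, j⟩ ⊆ E i) : SeparatedOn (s.sigma t) G := by
  rintro ⟨i, j⟩ hp ⟨i', j'⟩ hq hne
  obtain ⟨hi, hj⟩ := Finset.mem_sigma.1 hp
  obtain ⟨hi', hj'⟩ := Finset.mem_sigma.1 hq
  by_cases hii : i = i'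
  · subst hii
    exact ht i hi hj hj' fun hjj => hne (congrArg _ hjj)
  · exact (h hi hi' hii).mono (hsub i hi j hj) (hsub i' hi' j' hj')

lemma exists_perm_flt {n : ℕ} {E : Fin n → Finset ℕ} (h : SeparatedOn Finset.univ E) :
    ∃ σ : Equiv.Perm (Fin n), ∀ i j, i < j → FLt (E (σ i)) (E (σ j)) := by
  let key : Fin n → ℕ := fun i => (E i).sup id
  refine ⟨Tuple.sort key, fun i j hij => ?_⟩
  have hle : key (Tuple.sort key i) ≤ key (Tuple.sort key j) := Tuple.monotone_sort key hij.le
  intro a ha b hb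
  have hne : Tuple.sort key i ≠ Tuple.sort key j := (Tuple.sort key).injective.ne hij.ne
  rcases h (by simp) (by simp) hne with hlt | hgt
  · exact hlt a ha b hb
  · obtain ⟨c, hc, hkey_eq⟩ := Finset.exists_mem_eq_sup _ ⟨b, hb⟩ id
    exact absurd ((Finset.le_sup (f := id) ha).trans (hle.trans hkey_eq.le)) (hgt c hc a ha).not_ge

end SeparatedOn

/-! ### Basic properties of the norm -/

lemma abs_apply_le_supNorm (x : c00) (i : ℕ) : |x i| ≤ supNorm x :=
  le_ciSup (f := fun i => |x i|) (x.finite_range.image abs |>.bddAbove.mono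
    (Set.range_comp abs x).le) i

lemma exists_supNorm_eq (x : c00) : ∃ i, supNorm x = |x i| := by
  have hfin : (Set.range fun i => |x i|).Finite :=
    (x.finite_range.image abs).subset (Set.range_comp abs x).le
  obtain ⟨i, hi⟩ := (Set.range_nonempty _).csSup_mem hfin
  exact ⟨i, hi.symm⟩

namespace IsSchlumprechtNorm

variable {N : c00 → ℝ} {ι : Type*} {s : Finset ι} {E : ι → Finset ℕ}

lemma zero (hN : IsSchlumprechtNorm N) : N 0 = 0 := (hN.1.1 0).2 rfl

lemma add_le (hN : IsSchlumprechtNorm N) (x y : c00) : N (x + y) ≤ N x + N y := hN.1.2.1 x y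

lemma smul (hN : IsSchlumprechtNorm N) (a : ℝ) (x : c00) : N (a • x) = |a| * N x := hN.1.2.2 a x

lemma abs_apply_le (hN : IsSchlumprechtNorm N) (x : c00) (i : ℕ) : |x i| ≤ N x :=
  (abs_apply_le_supNorm x i).trans ((hN.2 x).1 (Set.mem_insert _ _))

lemma nonneg (hN : IsSchlumprechtNorm N) (x : c00) : 0 ≤ N x :=
  (abs_nonneg _).trans (hN.abs_apply_le x 0)

-- The term `N x` in the maximum is harmless because `flog n ≥ 3 / 2` for `n ≥ 2`.
lemma le_of_forall_sum_le (hN : IsSchlumprechtNorm N) {x : c00} {B : ℝ} (h0 : ∀ i, |x i| ≤ B)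
    (h : ∀ (n : ℕ) (E : Fin n → Finset ℕ), 2 ≤ n → SeparatedOn Finset.univ E →
      ∑ i, N (proj (E i) x) ≤ max (flog n * B) (N x)) : N x ≤ B := by
  have hB : 0 ≤ B := (abs_nonneg _).trans (h0 0)
  have hmax : N x ≤ max B (2 / 3 * N x) := by
    refine (hN.2 x).2 ?_
    rintro _ (rfl | ⟨n, hn, E, hE, rfl⟩)
    · exact le_max_of_le_left (ciSup_le h0)
    · have hflog := three_halves_le_flog hn
      have hsep : SeparatedOn Finset.univ E := fun i _ j _ hij => hij.lt_or_gt.imp (hE i j) (hE j i)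
      rw [inv_mul_le_iff₀ (by linarith), mul_max_of_nonneg _ _ (by linarith)]
      refine (h n E hn hsep).trans (max_le_max le_rfl ?_)
      nlinarith [hN.nonneg x]
  rcases le_max_iff.1 hmax with h | h <;> linarith

lemma sum_proj_le_of_two_le_card (hN : IsSchlumprechtNorm N) (hs : 2 ≤ s.card)
    (hE : SeparatedOn s E) (x : c00) : ∑ i ∈ s, N (proj (E i) x) ≤ flog s.card * N x := by
  have hfin : SeparatedOn Finset.univ fun j => E (s.equivFin.symm j) := fun i _ j _ hij =>
    hE (Subtype.prop _) (Subtype.prop _)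
      (Subtype.coe_injective.ne (s.equivFin.symm.injective.ne hij))
  obtain ⟨σ, hσ⟩ := hfin.exists_perm_flt
  have hsum : ∑ i ∈ s, N (proj (E i) x) = ∑ j, N (proj (E (s.equivFin.symm (σ j))) x) := by
    rw [← Finset.sum_coe_sort, Equiv.sum_comp σ fun j => N (proj (E (s.equivFin.symm j)) x),
      Equiv.sum_comp s.equivFin.symm fun i => N (proj (E i) x)]
  rw [hsum, ← inv_mul_le_iff₀ (by linarith [three_halves_le_flog hs])]
  exact (hN.2 x).1 (Set.mem_insert_of_mem _ ⟨s.card, hs, _, hσ, rfl⟩)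

lemma proj_le (hN : IsSchlumprechtNorm N) (F : Finset ℕ) (x : c00) : N (proj F x) ≤ N x := by
  refine hN.le_of_forall_sum_le (fun i => ?_) fun n E hn hE => le_max_of_le_left ?_
  · rw [proj_apply]
    split_ifs
    · exact hN.abs_apply_le x i
    · simpa using hN.nonneg x
  · have h := hN.sum_proj_le_of_two_le_card (by simpa using hn)
      (hE.mono (F := fun i => E i ∩ F) fun i _ => Finset.inter_subset_left) x
    simpa only [proj_proj, Finset.card_univ, Fintype.card_fin] using h

lemma sum_proj_le (hN : IsSchlumprechtNorm N) (hE : SeparatedOn s E) (x : c00) :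
    ∑ i ∈ s, N (proj (E i) x) ≤ flog s.card * N x := by
  rcases Nat.lt_or_ge s.card 2 with hs | hs
  · interval_cases hcard : s.card
    · simp [Finset.card_eq_zero.1 hcard, flog_zero]
    · obtain ⟨i, rfl⟩ := Finset.card_eq_one.1 hcard
      simpa [flog_one] using hN.proj_le (E i) x
  · exact hN.sum_proj_le_of_two_le_card hs hE x

lemma single_one_le (hN : IsSchlumprechtNorm N) (i : ℕ) : N (Finsupp.single i 1) ≤ 1 := by
  refine hN.le_of_forall_sum_le (fun j => ?_) fun _ E _ hE => ?_
  · rw [Finsupp.single_apply]; split_ifs <;> simp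
  by_cases h : ∃ j, i ∈ E j
  · obtain ⟨j, hj⟩ := h
    refine le_max_of_le_right ?_
    rw [Finset.sum_eq_single_of_mem j (Finset.mem_univ j)]
    · exact hN.proj_le _ _
    · intro j' _ hne
      have hi : i ∉ E j' :=
        Finset.disjoint_left.1 (hE (by simp) (by simp) hne.symm).disjoint hj
      rw [proj_eq_zero (by simpa using hi), hN.zero]
  · push Not at h
    have hzero j : N (proj (E j) (Finsupp.single i 1)) = 0 := by
      rw [proj_eq_zero (by simpa using h j), hN.zero]
    simp only [hzero, Finset.sum_const_zero]
    exact le_max_of_le_right (hN.nonneg _)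

lemma le_sum_abs (hN : IsSchlumprechtNorm N) (x : c00) : N x ≤ ∑ i ∈ x.support, |x i| := by
  have hx : x = ∑ i ∈ x.support, x i • (Finsupp.single i 1 : c00) := by
    simpa [Finsupp.sum] using x.sum_single.symm
  calc N x = N (∑ i ∈ x.support, x i • (Finsupp.single i 1 : c00)) := by rw [← hx]
    _ ≤ ∑ i ∈ x.support, N (x i • (Finsupp.single i 1 : c00)) :=
      Finset.le_sum_of_subadditive N hN.zero.le hN.add_le _ _
    _ ≤ ∑ i ∈ x.support, |x i| := Finset.sum_le_sum fun i _ => by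
      rw [hN.smul]
      exact mul_le_of_le_one_right (abs_nonneg _) (hN.single_one_le i)

end IsSchlumprechtNorm

/-! ### Optimal splittings -/

open Classical in
/-- The separated families of nonempty subsets of the support of `x`. There are finitely many of
them, so that suprema over splittings of `x` are attained. -/
noncomputable def sepFamilies (x : c00) : Finset (Finset (Finset ℕ)) :=
  x.support.powerset.powerset.filter fun P => SeparatedOn P id ∧ ∅ ∉ P

section sepFamilies

variable {x : c00} {P : Finset (Finset ℕ)}

lemma mem_sepFamilies :
    P ∈ sepFamilies x ↔ (∀ E ∈ P, E ⊆ x.support) ∧ SeparatedOn P id ∧ ∅ ∉ P := by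
  simp [sepFamilies, Finset.subset_iff]

lemma empty_mem_sepFamilies (x : c00) : ∅ ∈ sepFamilies x := by
  simp [mem_sepFamilies, SeparatedOn]

lemma sum_sum_abs_le_of_mem_sepFamilies (hP : P ∈ sepFamilies x) :
    ∑ E ∈ P, ∑ i ∈ E, |x i| ≤ ∑ i ∈ x.support, |x i| := by
  obtain ⟨hsub, hsep, -⟩ := mem_sepFamilies.1 hP
  refine (Finset.sum_biUnion (t := id) hsep.pairwiseDisjoint).symm.trans_le ?_
  exact Finset.sum_le_sum_of_subset_of_nonneg (Finset.biUnion_subset.2 hsub)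
    fun i _ _ => abs_nonneg _

lemma SeparatedOn.exists_mem_sepFamilies {N : c00 → ℝ} (hN : IsSchlumprechtNorm N) {ι : Type*}
    {s : Finset ι} {E : ι → Finset ℕ} (hE : SeparatedOn s E) (x : c00) :
    ∃ P ∈ sepFamilies x, P.card ≤ s.card ∧
      ∑ i ∈ s, N (proj (E i) x) = ∑ F ∈ P, N (proj F x) := by
  classical
  have hE' : SeparatedOn s fun i => E i ∩ x.support := hE.mono fun _ _ => Finset.inter_subset_left
  refine ⟨(s.image fun i => E i ∩ x.support).erase ∅, mem_sepFamilies.2 ⟨?_, ?_, ?_⟩, ?_, ?_⟩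
  · intro F hF
    obtain ⟨i, -, rfl⟩ := Finset.mem_image.1 (Finset.mem_of_mem_erase hF)
    exact Finset.inter_subset_right
  · intro F hF G hG hFG
    obtain ⟨i, hi, rfl⟩ := Finset.mem_image.1 (Finset.mem_of_mem_erase hF)
    obtain ⟨j, hj, rfl⟩ := Finset.mem_image.1 (Finset.mem_of_mem_erase hG)
    exact hE' hi hj fun hij => hFG (by rw [hij])
  · exact Finset.notMem_erase _ _
  · exact (Finset.card_erase_le).trans Finset.card_image_le
  · rw [Finset.sum_erase _ (by rw [proj_empty, hN.zero]), Finset.sum_image_of_disjoint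
      (by rw [Finset.bot_eq_empty, proj_empty, hN.zero]) hE'.pairwiseDisjoint]
    simp only [proj_inter_support]

end sepFamilies

/-- The norm of `x` is attained at a coordinate. -/
def SupAttained (N : c00 → ℝ) (x : c00) : Prop := ∃ i, N x ≤ |x i|

/-- The splitting `P` attains the norm of `x` in the implicit equation. -/
structure IsOptimal (N : c00 → ℝ) (x : c00) (P : Finset (Finset ℕ)) : Prop where
  mem_sepFamilies : P ∈ sepFamilies x
  two_le_card : 2 ≤ P.card
  le_sum : flog P.card * N x ≤ ∑ E ∈ P, N (proj E x)

namespace IsOptimal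

variable {N : c00 → ℝ} {x : c00} {P : Finset (Finset ℕ)}

lemma subset_support (hP : IsOptimal N x P) {E : Finset ℕ} (hE : E ∈ P) : E ⊆ x.support :=
  (_root_.mem_sepFamilies.1 hP.mem_sepFamilies).1 E hE

lemma separatedOn (hP : IsOptimal N x P) : SeparatedOn P id :=
  (_root_.mem_sepFamilies.1 hP.mem_sepFamilies).2.1

lemma card_support_proj_lt (hP : IsOptimal N x P) {E : Finset ℕ} (hE : E ∈ P) :
    (proj E x).support.card < x.support.card := by
  rw [support_proj_of_subset (hP.subset_support hE)]
  refine Finset.card_lt_card ((hP.subset_support hE).ssubset_of_ne fun heq => ?_)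
  obtain ⟨F, hF, hFE⟩ := Finset.exists_mem_ne hP.two_le_card E
  have hdisj : Disjoint F E := (hP.separatedOn hF hE hFE).disjoint
  have hempty : F = ∅ :=
    Finset.disjoint_self_iff_empty F |>.1 (hdisj.mono_right (heq ▸ hP.subset_support hF))
  exact (_root_.mem_sepFamilies.1 hP.mem_sepFamilies).2.2 (hempty ▸ hF)

end IsOptimal

lemma IsSchlumprechtNorm.supAttained_or_exists_isOptimal {N : c00 → ℝ} (hN : IsSchlumprechtNorm N)
    (x : c00) : SupAttained N x ∨ ∃ P, IsOptimal N x P := by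
  classical
  set T := (sepFamilies x).filter (2 ≤ ·.card)
  set val : Finset (Finset ℕ) → ℝ := fun P => (flog P.card)⁻¹ * ∑ E ∈ P, N (proj E x)
  obtain ⟨i, hi⟩ := exists_supNorm_eq x
  obtain ⟨B, hBmem, hBmax⟩ :=
    Finset.exists_max_image (insert (supNorm x) (T.image val)) id (Finset.insert_nonempty _ _)
  have hB : N x ≤ B := by
    refine hN.le_of_forall_sum_le
      (fun i => (abs_apply_le_supNorm x i).trans (hBmax _ (Finset.mem_insert_self _ _)))
      fun n E _ hE => ?_
    obtain ⟨P, hP, hcard, hsum⟩ := hE.exists_mem_sepFamilies hN x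
    rw [Finset.card_univ, Fintype.card_fin] at hcard
    rw [hsum]
    rcases Nat.lt_or_ge P.card 2 with h2 | h2
    · refine le_max_of_le_right
        ((hN.sum_proj_le (mem_sepFamilies.1 hP).2.1 x).trans
          (mul_le_of_le_one_left (hN.nonneg x) ?_))
      simpa [flog_one] using flog_natCast_le_flog (Nat.lt_succ_iff.1 h2)
    · have hval : val P ≤ B := hBmax _ (Finset.mem_insert_of_mem
        (Finset.mem_image_of_mem _ (Finset.mem_filter.2 ⟨hP, h2⟩)))
      rw [inv_mul_le_iff₀ (by linarith [three_halves_le_flog h2])] at hval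
      have hB0 : 0 ≤ B := (abs_nonneg _).trans
        (hi.symm.le.trans (hBmax _ (Finset.mem_insert_self _ _)))
      exact le_max_of_le_left
        (hval.trans (mul_le_mul_of_nonneg_right (flog_natCast_le_flog hcard) hB0))
  rcases Finset.mem_insert.1 hBmem with rfl | hBT
  · exact .inl ⟨i, hB.trans hi.le⟩
  · obtain ⟨P, hPT, rfl⟩ := Finset.mem_image.1 hBT
    obtain ⟨hP, h2⟩ := Finset.mem_filter.1 hPT
    exact .inr ⟨P, hP, h2,
      (le_inv_mul_iff₀ (by linarith [three_halves_le_flog h2])).1 hB⟩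

/-- The largest value of `∑ N (proj E x)` over separated families of at most `n` sets `E`. -/
noncomputable def splitNorm (N : c00 → ℝ) (n : ℕ) (x : c00) : ℝ :=
  ((sepFamilies x).filter (·.card ≤ n)).sup'
    ⟨∅, Finset.mem_filter.2 ⟨empty_mem_sepFamilies x, Nat.zero_le _⟩⟩ fun P => ∑ E ∈ P, N (proj E x)

lemma exists_splitNorm_eq (N : c00 → ℝ) (n : ℕ) (x : c00) :
    ∃ P ∈ sepFamilies x, P.card ≤ n ∧ splitNorm N n x = ∑ E ∈ P, N (proj E x) := by
  obtain ⟨P, hP, h⟩ := Finset.exists_mem_eq_sup' (s := (sepFamilies x).filter (·.card ≤ n))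
    ⟨∅, Finset.mem_filter.2 ⟨empty_mem_sepFamilies x, Nat.zero_le _⟩⟩ fun P => ∑ E ∈ P, N (proj E x)
  exact ⟨P, (Finset.mem_filter.1 hP).1, (Finset.mem_filter.1 hP).2, h⟩

lemma sum_proj_le_splitNorm_of_mem (N : c00 → ℝ) {n : ℕ} {x : c00} {P : Finset (Finset ℕ)}
    (hP : P ∈ sepFamilies x) (hcard : P.card ≤ n) :
    ∑ E ∈ P, N (proj E x) ≤ splitNorm N n x :=
  (Finset.le_sup'_iff _).2 ⟨P, Finset.mem_filter.2 ⟨hP, hcard⟩, le_rfl⟩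

lemma splitNorm_mono (N : c00 → ℝ) {m n : ℕ} (h : m ≤ n) (x : c00) :
    splitNorm N m x ≤ splitNorm N n x := by
  obtain ⟨P, hP, hcard, hsum⟩ := exists_splitNorm_eq N m x
  exact hsum.trans_le (sum_proj_le_splitNorm_of_mem N hP (hcard.trans h))

lemma IsOptimal.le_splitNorm {N : c00 → ℝ} {x : c00} {P : Finset (Finset ℕ)}
    (hP : IsOptimal N x P) : flog P.card * N x ≤ splitNorm N P.card x :=
  hP.le_sum.trans (sum_proj_le_splitNorm_of_mem N hP.mem_sepFamilies le_rfl)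

namespace IsSchlumprechtNorm

variable {N : c00 → ℝ} {ι : Type*} {s : Finset ι} {E : ι → Finset ℕ} {n : ℕ}

lemma sum_proj_le_splitNorm (hN : IsSchlumprechtNorm N) (hE : SeparatedOn s E) (hn : s.card ≤ n)
    (x : c00) : ∑ i ∈ s, N (proj (E i) x) ≤ splitNorm N n x := by
  obtain ⟨P, hP, hcard, hsum⟩ := hE.exists_mem_sepFamilies hN x
  rw [hsum]
  exact sum_proj_le_splitNorm_of_mem N hP (hcard.trans hn)

lemma splitNorm_nonneg (hN : IsSchlumprechtNorm N) (n : ℕ) (x : c00) : 0 ≤ splitNorm N n x := by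
  obtain ⟨P, -, -, hsum⟩ := exists_splitNorm_eq N n x
  exact hsum.symm ▸ Finset.sum_nonneg fun E _ => hN.nonneg _

lemma splitNorm_le (hN : IsSchlumprechtNorm N) (n : ℕ) (x : c00) :
    splitNorm N n x ≤ flog n * N x := by
  obtain ⟨P, hP, hcard, hsum⟩ := exists_splitNorm_eq N n x
  exact hsum.trans_le ((hN.sum_proj_le (mem_sepFamilies.1 hP).2.1 x).trans
    (mul_le_mul_of_nonneg_right (flog_natCast_le_flog hcard) (hN.nonneg x)))

lemma le_splitNorm (hN : IsSchlumprechtNorm N) (hn : 1 ≤ n) (x : c00) : N x ≤ splitNorm N n x := by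
  have hsep : SeparatedOn {x.support} id := by simp [SeparatedOn]
  simpa [proj_eq_self subset_rfl] using hN.sum_proj_le_splitNorm hsep (n := n) (by simpa using hn) x

lemma splitNorm_smul (hN : IsSchlumprechtNorm N) (n : ℕ) (a : ℝ) (x : c00) :
    splitNorm N n (a • x) = |a| * splitNorm N n x := by
  have hsmul (P : Finset (Finset ℕ)) :
      ∑ E ∈ P, N (proj E (a • x)) = |a| * ∑ E ∈ P, N (proj E x) := by
    simp only [proj_smul, hN.smul, Finset.mul_sum]
  apply le_antisymm
  · obtain ⟨P, hP, hcard, hsum⟩ := exists_splitNorm_eq N n (a • x)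
    rw [hsum, hsmul]
    have hsub : P ∈ sepFamilies x := mem_sepFamilies.2 ⟨fun E hE =>
      ((mem_sepFamilies.1 hP).1 E hE).trans Finsupp.support_smul, (mem_sepFamilies.1 hP).2⟩
    exact mul_le_mul_of_nonneg_left (sum_proj_le_splitNorm_of_mem N hsub hcard) (abs_nonneg a)
  · obtain ⟨P, hP, hcard, hsum⟩ := exists_splitNorm_eq N n x
    rw [hsum, ← hsmul]
    exact hN.sum_proj_le_splitNorm (mem_sepFamilies.1 hP).2.1 hcard _

lemma splitNorm_le_card_support (hN : IsSchlumprechtNorm N) (n : ℕ) {x : c00} (hx : N x ≤ 1) :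
    splitNorm N n x ≤ x.support.card := by
  obtain ⟨P, hP, -, hsum⟩ := exists_splitNorm_eq N n x
  have hpiece (E) (hE : E ∈ P) : N (proj E x) ≤ ∑ i ∈ E, |x i| := by
    refine (hN.le_sum_abs _).trans_eq ?_
    rw [support_proj_of_subset ((mem_sepFamilies.1 hP).1 E hE)]
    exact Finset.sum_congr rfl fun i hi => by rw [proj_apply, if_pos hi]
  calc splitNorm N n x = ∑ E ∈ P, N (proj E x) := hsum
    _ ≤ ∑ E ∈ P, ∑ i ∈ E, |x i| := Finset.sum_le_sum hpiece
    _ ≤ ∑ i ∈ x.support, |x i| := sum_sum_abs_le_of_mem_sepFamilies hP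
    _ ≤ ∑ i ∈ x.support, 1 := Finset.sum_le_sum fun i _ => (hN.abs_apply_le x i).trans hx
    _ = x.support.card := by simp

lemma sum_splitNorm_proj_le (hN : IsSchlumprechtNorm N) (hE : SeparatedOn s E) (d : ι → ℕ)
    (x : c00) :
    ∑ i ∈ s, splitNorm N (d i) (proj (E i) x) ≤ splitNorm N (∑ i ∈ s, d i) x := by
  choose P hP hcard hsum using fun i => exists_splitNorm_eq N (d i) (proj (E i) x)
  have hsub {i F} (hF : F ∈ P i) : F ⊆ E i :=
    ((mem_sepFamilies.1 (hP i)).1 F hF).trans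
      ((support_proj _ _).le.trans Finset.inter_subset_right)
  have hsep : SeparatedOn (s.sigma P) fun p => p.2 :=
    hE.sigma (fun i _ => (mem_sepFamilies.1 (hP i)).2.1) fun i _ F hF => hsub hF
  have hcard' : (s.sigma P).card ≤ ∑ i ∈ s, d i := by
    rw [Finset.card_sigma]
    exact Finset.sum_le_sum fun i _ => hcard i
  calc ∑ i ∈ s, splitNorm N (d i) (proj (E i) x) = ∑ p ∈ s.sigma P, N (proj p.2 x) := by
        rw [Finset.sum_sigma]
        refine Finset.sum_congr rfl fun i _ => (hsum i).trans (Finset.sum_congr rfl fun F hF => ?_)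
        rw [proj_proj_of_subset (hsub hF)]
    _ ≤ splitNorm N (∑ i ∈ s, d i) x := hN.sum_proj_le_splitNorm hsep hcard' x

end IsSchlumprechtNorm

/-! ### Slack functionals -/

/-- Functionals, with a set carrying them, built like the norming functionals of the norm except
that a sum of at most `n` functionals is divided by `flog (4 * n)` instead of `flog n`. The slack
leaves room for cutting the sum into up to `4 * n` pieces. -/
inductive SlackFunctional : Finset ℕ → (c00 →ₗ[ℝ] ℝ) → Prop
  | coord (i : ℕ) {ε : ℝ} (hε : |ε| ≤ 1) : SlackFunctional {i} (ε • Finsupp.lapply i)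
  | node {ι : Type} {n : ℕ} {s : Finset ι} {E : ι → Finset ℕ} {φ : ι → c00 →ₗ[ℝ] ℝ}
      (hs : s.card ≤ n) (hE : SeparatedOn s E) (hφ : ∀ p ∈ s, SlackFunctional (E p) (φ p)) :
      SlackFunctional (s.biUnion E) ((flog (4 * n : ℕ))⁻¹ • ∑ p ∈ s, φ p)

namespace SlackFunctional

variable {N : c00 → ℝ} {E F : Finset ℕ} {φ : c00 →ₗ[ℝ] ℝ}

lemma zero : SlackFunctional ∅ 0 := by
  simpa using node (ι := ℕ) (n := 0) (s := ∅) (E := fun _ => ∅) (φ := fun _ => 0) (by simp)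
    (by simp [SeparatedOn]) (by simp)

lemma apply_proj (h : SlackFunctional E φ) (hEF : E ⊆ F) (x : c00) : φ (proj F x) = φ x := by
  induction h with
  | coord i _ =>
    simp [proj_apply, Finset.singleton_subset_iff.1 hEF]
  | node _ _ _ ih =>
    simp only [LinearMap.smul_apply, LinearMap.sum_apply]
    rw [Finset.sum_congr rfl fun p hp =>
      ih p hp ((Finset.subset_biUnion_of_mem _ hp).trans hEF)]

lemma apply_eq_zero (h : SlackFunctional E φ) {x : c00} (hx : Disjoint E x.support) : φ x = 0 := by
  rw [← h.apply_proj subset_rfl, proj_eq_zero hx, map_zero]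

lemma abs_apply_le (hN : IsSchlumprechtNorm N) (h : SlackFunctional E φ) (x : c00) :
    |φ x| ≤ N (proj E x) := by
  induction h with
  | @coord i ε hε =>
    calc |ε * x i| ≤ |x i| := by
          rw [abs_mul]; exact mul_le_of_le_one_left (abs_nonneg _) hε
      _ = |proj {i} x i| := by simp [proj_apply]
      _ ≤ N (proj {i} x) := hN.abs_apply_le _ i
  | @node ι n s E φ hs hE _ ih =>
    have hflog : 0 ≤ flog (4 * n : ℕ) := flog_natCast_nonneg _
    rw [LinearMap.smul_apply, LinearMap.sum_apply, smul_eq_mul, abs_mul,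
      abs_of_nonneg (inv_nonneg.2 hflog)]
    refine inv_mul_le_of_le_mul₀ hflog (hN.nonneg _) ?_
    calc |∑ p ∈ s, φ p x| ≤ ∑ p ∈ s, |φ p x| := Finset.abs_sum_le_sum_abs _ _
      _ ≤ ∑ p ∈ s, N (proj (E p) (proj (s.biUnion E) x)) := Finset.sum_le_sum fun p hp => by
        rw [proj_proj_of_subset (Finset.subset_biUnion_of_mem E hp)]
        exact ih p hp
      _ ≤ flog s.card * N (proj (s.biUnion E) x) := hN.sum_proj_le hE _
      _ ≤ flog (4 * n : ℕ) * N (proj (s.biUnion E) x) :=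
        mul_le_mul_of_nonneg_right (flog_natCast_le_flog (by omega)) (hN.nonneg _)

end SlackFunctional

/-- Some slack functional carried by the support of `x` norms `x` up to the factor `θ`. -/
def SlackNormed (N : c00 → ℝ) (θ : ℝ) (x : c00) : Prop :=
  ∃ E φ, SlackFunctional E φ ∧ E ⊆ x.support ∧ θ * N x ≤ φ x

namespace SlackNormed

variable {N : c00 → ℝ} {θ θ' : ℝ} {x : c00}

lemma mono (hN : IsSchlumprechtNorm N) (h : SlackNormed N θ x) (hθ : θ' ≤ θ) :
    SlackNormed N θ' x := by
  obtain ⟨E, φ, hφ, hE, hle⟩ := h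
  exact ⟨E, φ, hφ, hE, (mul_le_mul_of_nonneg_right hθ (hN.nonneg x)).trans hle⟩

lemma of_proj {E : Finset ℕ} (h : SlackNormed N θ (proj E x)) (hx : θ' * N x ≤ θ * N (proj E x)) :
    SlackNormed N θ' x := by
  obtain ⟨F, φ, hφ, hF, hle⟩ := h
  rw [support_proj] at hF
  rw [hφ.apply_proj (hF.trans Finset.inter_subset_right)] at hle
  exact ⟨F, φ, hφ, hF.trans Finset.inter_subset_left, hx.trans hle⟩

lemma of_pieces {P : Finset (Finset ℕ)} {n : ℕ} (hn : 0 < n) (hcard : P.card ≤ n)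
    (hP : SeparatedOn P id) (h : ∀ E ∈ P, SlackNormed N θ (proj E x))
    (hx : θ' * N x * flog (4 * n : ℕ) ≤ θ * ∑ E ∈ P, N (proj E x)) : SlackNormed N θ' x := by
  choose! F φ hφ hF hle using h
  have hFE (E) (hE : E ∈ P) : F E ⊆ x.support ∩ E := by
    simpa only [support_proj] using hF E hE
  have hFsep : SeparatedOn P F := hP.mono fun E hE => (hFE E hE).trans Finset.inter_subset_right
  refine ⟨_, _, .node hcard hFsep hφ,
    Finset.biUnion_subset.2 fun E hE => (hFE E hE).trans Finset.inter_subset_left, ?_⟩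
  have hpos : 0 < flog (4 * n : ℕ) := zero_lt_one.trans_le (one_le_flog (by omega))
  rw [LinearMap.smul_apply, LinearMap.sum_apply, smul_eq_mul, le_inv_mul_iff₀' hpos]
  refine hx.trans ?_
  rw [Finset.mul_sum]
  refine Finset.sum_le_sum fun E hE => ?_
  rw [← (hφ E hE).apply_proj ((hFE E hE).trans Finset.inter_subset_right)]
  exact hle E hE

end SlackNormed

lemma SupAttained.slackNormed {N : c00 → ℝ} {x : c00} (h : SupAttained N x) :
    SlackNormed N 1 x := by
  obtain ⟨i, hi⟩ := h
  by_cases hxi : x i = 0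
  · exact ⟨∅, 0, .zero, Finset.empty_subset _, by simpa [hxi] using hi⟩
  · obtain ⟨ε, hε, heq⟩ : ∃ ε : ℝ, |ε| ≤ 1 ∧ ε * x i = |x i| := by
      rcases abs_choice (x i) with h | h
      · exact ⟨1, by simp, by rw [h, one_mul]⟩
      · exact ⟨-1, by simp, by rw [h, neg_one_mul]⟩
    refine ⟨{i}, _, .coord i hε, by simpa using hxi, ?_⟩
    rw [one_mul]
    exact hi.trans_eq heq.symm

namespace IsOptimal

variable {N : c00 → ℝ} {x : c00} {P I : Finset (Finset ℕ)} {Q : Finset ℕ → Finset (Finset ℕ)}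

-- Cutting the pieces in `I` further multiplies the number of pieces by at most `2 ^ T`, which adds
-- at most `T` to `flog P.card`.
lemma mul_sum_proj_le (hN : IsSchlumprechtNorm N) (hP : IsOptimal N x P) (hIP : I ⊆ P)
    (hQ : ∀ E ∈ I, IsOptimal N (proj E x) (Q E)) {c T : ℝ} (hT1 : 1 ≤ T)
    (hc : ∀ E ∈ I, c + 1 ≤ flog (Q E).card) (hT : ∀ E ∈ I, flog (Q E).card ≤ T) :
    c * ∑ E ∈ I, N (proj E x) ≤ T * N x := by
  classical
  set d : Finset ℕ → ℕ := fun E => if E ∈ I then (Q E).card else 1 with hd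
  have hpiece (E) (_ : E ∈ P) : N (proj E x) + (if E ∈ I then c * N (proj E x) else 0) ≤
      splitNorm N (d E) (proj E x) := by
    by_cases hE : E ∈ I
    · simp only [hd, if_pos hE]
      nlinarith [(hQ E hE).le_splitNorm, hc E hE, hN.nonneg (proj E x)]
    · simp only [hd, if_neg hE, add_zero]
      exact hN.le_splitNorm le_rfl _
  have hcard : flog (∑ E ∈ P, d E : ℕ) ≤ flog P.card + T := by
    refine flog_sum_le (zero_le_one.trans hT1) fun E _ => ?_
    by_cases hE : E ∈ I
    · simpa only [hd, if_pos hE] using hT E hE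
    · simpa [hd, hE, flog_one] using hT1
  have hsum : ∑ E ∈ P, N (proj E x) + c * ∑ E ∈ I, N (proj E x) ≤ (flog P.card + T) * N x := by
    calc ∑ E ∈ P, N (proj E x) + c * ∑ E ∈ I, N (proj E x)
        = ∑ E ∈ P, (N (proj E x) + if E ∈ I then c * N (proj E x) else 0) := by
          rw [Finset.sum_add_distrib, Finset.sum_ite_mem, Finset.inter_eq_right.2 hIP,
            Finset.mul_sum]
      _ ≤ ∑ E ∈ P, splitNorm N (d E) (proj E x) := Finset.sum_le_sum hpiece
      _ ≤ splitNorm N (∑ E ∈ P, d E) x := hN.sum_splitNorm_proj_le hP.separatedOn d x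
      _ ≤ flog (∑ E ∈ P, d E : ℕ) * N x := hN.splitNorm_le _ x
      _ ≤ (flog P.card + T) * N x := mul_le_mul_of_nonneg_right hcard (hN.nonneg x)
  linarith [hP.le_sum]

lemma sum_proj_le_six_mul (hN : IsSchlumprechtNorm N) (hP : IsOptimal N x P) (hIP : I ⊆ P)
    (hQ : ∀ E ∈ I, IsOptimal N (proj E x) (Q E)) {r : ℝ} (hr : 2 ≤ r)
    (hI : ∀ E ∈ I, flog (Q E).card ≤ 2 * r ^ 2) : ∑ E ∈ I, N (proj E x) ≤ 6 * r * N x := by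
  classical
  set short := I.filter fun E => flog (Q E).card ≤ r
  set long := I.filter fun E => ¬flog (Q E).card ≤ r
  have hshort : 1 / 2 * ∑ E ∈ short, N (proj E x) ≤ r * N x := by
    refine hP.mul_sum_proj_le hN ((Finset.filter_subset _ _).trans hIP)
      (fun E hE => hQ E (Finset.filter_subset _ _ hE)) (by linarith) (fun E hE => ?_)
      fun E hE => (Finset.mem_filter.1 hE).2
    linarith [three_halves_le_flog (hQ E (Finset.filter_subset _ _ hE)).two_le_card]
  have hlong : r / 2 * ∑ E ∈ long, N (proj E x) ≤ 2 * r ^ 2 * N x := by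
    refine hP.mul_sum_proj_le hN ((Finset.filter_subset _ _).trans hIP)
      (fun E hE => hQ E (Finset.filter_subset _ _ hE)) (by nlinarith) (fun E hE => ?_)
      fun E hE => hI E (Finset.filter_subset _ _ hE)
    linarith [not_le.1 (Finset.mem_filter.1 hE).2]
  have hlong' : ∑ E ∈ long, N (proj E x) ≤ 4 * r * N x :=
    le_of_mul_le_mul_left (by linarith) (show 0 < r / 2 by linarith)
  rw [← Finset.sum_filter_add_sum_filter_not I fun E => flog (Q E).card ≤ r]
  linarith

lemma slackNormed_of_pieces (hN : IsSchlumprechtNorm N) (hP : IsOptimal N x P) (hIP : I ⊆ P)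
    {r : ℝ} (hI : ∀ E ∈ I, SlackNormed N (1 - 18 / r) (proj E x)) (hr : 24 ≤ r)
    (hl : flog P.card = r ^ 2) (hsum : (r ^ 2 - 6 * r) * N x ≤ ∑ E ∈ I, N (proj E x)) :
    SlackNormed N (1 - 24 / r) x := by
  refine .of_pieces (n := P.card) (θ := 1 - 18 / r)
    (zero_lt_two.trans_le hP.two_le_card) (Finset.card_le_card hIP)
    (hP.separatedOn.subset hIP) hI ?_
  have h18 : 0 ≤ 1 - 18 / r := by
    rw [sub_nonneg, div_le_one (by linarith)]; linarith
  have h24 : 0 ≤ 1 - 24 / r := by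
    rw [sub_nonneg, div_le_one (by linarith)]; linarith
  calc (1 - 24 / r) * N x * flog (4 * P.card : ℕ)
      ≤ (1 - 24 / r) * N x * (r ^ 2 + 3) := by
        rw [← hl]
        exact mul_le_mul_of_nonneg_left (flog_four_mul_le _) (mul_nonneg h24 (hN.nonneg x))
    _ = (r ^ 2 - 24 * r + 3 - 72 / r) * N x := by field_simp; ring
    _ ≤ (r ^ 2 - 24 * r + 108) * N x := by
        have : 0 ≤ 72 / r := by positivity
        exact mul_le_mul_of_nonneg_right (by linarith) (hN.nonneg x)
    _ = (1 - 18 / r) * ((r ^ 2 - 6 * r) * N x) := by field_simp; ring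
    _ ≤ (1 - 18 / r) * ∑ E ∈ I, N (proj E x) :=
        mul_le_mul_of_nonneg_left hsum h18

lemma slackNormed (hN : IsSchlumprechtNorm N) (hP : IsOptimal N x P)
    (hl : 48 ^ 2 ≤ flog P.card) : SlackNormed N (1 - 24 / √(flog P.card)) x := by
  classical
  induction hm : x.support.card using Nat.strong_induction_on generalizing x P with
  | _ m ih =>
  subst hm
  set r := √(flog P.card)
  have hr : 48 ≤ r := Real.le_sqrt_of_sq_le hl
  have hr2 : r ^ 2 = flog P.card := Real.sq_sqrt (by linarith)
  set good : Finset ℕ → Prop := fun E => SlackNormed N (1 - 18 / r) (proj E x)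
  have hbad (E) (hE : E ∈ P.filter (¬good ·)) :
      ∃ Q, IsOptimal N (proj E x) Q ∧ flog Q.card ≤ 2 * r ^ 2 := by
    obtain ⟨hEP, hEbad⟩ := Finset.mem_filter.1 hE
    rcases hN.supAttained_or_exists_isOptimal (proj E x) with hsup | ⟨Q, hQ⟩
    · exact absurd (hsup.slackNormed.mono hN (sub_le_self _ (by positivity))) hEbad
    · refine ⟨Q, hQ, le_of_not_gt fun hlt => hEbad ?_⟩
      refine (ih _ (hP.card_support_proj_lt hEP) hQ (by nlinarith) rfl).mono hN ?_
      have hsqrt : 4 / 3 * r ≤ √(flog Q.card) := Real.le_sqrt_of_sq_le (by nlinarith)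
      have h18 : 24 / √(flog Q.card) ≤ 24 / (4 / 3 * r) := by gcongr
      have : 24 / (4 / 3 * r) = 18 / r := by field_simp; norm_num
      linarith
  choose! Q hQ hQr using hbad
  have hbadsum := hP.sum_proj_le_six_mul hN (Finset.filter_subset _ _) hQ (by linarith) hQr
  have hsplit := Finset.sum_filter_add_sum_filter_not P good fun E => N (proj E x)
  have hle := hP.le_sum
  rw [← hr2] at hle
  exact hP.slackNormed_of_pieces hN (Finset.filter_subset _ _)
    (fun E hE => (Finset.mem_filter.1 hE).2) (by linarith) hr2.symm (by linarith)

end IsOptimal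

/-- The norm of `x` is attained at a coordinate or by splitting `x` into a large number of pieces:
the two cases in which `x` is normed by a slack functional up to the factor `1 / 2`. -/
def Tame (N : c00 → ℝ) (x : c00) : Prop :=
  SupAttained N x ∨ ∃ P, IsOptimal N x P ∧ 48 ^ 2 ≤ flog P.card

lemma Tame.slackNormed {N : c00 → ℝ} (hN : IsSchlumprechtNorm N) {x : c00} (hx : Tame N x) :
    SlackNormed N (1 / 2) x := by
  rcases hx with hsup | ⟨P, hP, hl⟩
  · exact hsup.slackNormed.mono hN (by norm_num)
  · refine (hP.slackNormed hN hl).mono hN ?_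
    have hr : 48 ≤ √(flog P.card) := Real.le_sqrt_of_sq_le hl
    have hhalf : 24 / √(flog P.card) ≤ 1 / 2 := by
      rw [div_le_div_iff₀ (by linarith) two_pos]; linarith
    linarith

namespace IsSchlumprechtNorm

variable {N : c00 → ℝ}

-- Each splitting into at most `n₀` pieces multiplies the sum of the norms of the pieces by at
-- least `3 / 2`; the pieces satisfying `T` are lost on the way.
lemma three_halves_pow_mul_le_splitNorm (hN : IsSchlumprechtNorm N) {T : c00 → Prop} {n₀ : ℕ}
    (hn₀ : 1 ≤ n₀) (hsplit : ∀ x, T x ∨ ∃ P, IsOptimal N x P ∧ P.card ≤ n₀) {κ : ℝ} (hκ : 0 ≤ κ)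
    (d : ℕ) {x : c00} (hT : ∀ E, E ⊆ x.support → T (proj E x) → N (proj E x) ≤ κ) :
    (3 / 2) ^ d * (N x - (n₀ ^ d : ℕ) * κ) ≤ splitNorm N (n₀ ^ d) x := by
  induction d generalizing x with
  | zero => simpa using (sub_le_self _ hκ).trans (hN.le_splitNorm le_rfl x)
  | succ d ih =>
  rcases hsplit x with hx | ⟨P, hP, hcard⟩
  · have hle : N x ≤ (n₀ ^ (d + 1) : ℕ) * κ := by
      have h := hT x.support subset_rfl
      rw [proj_eq_self subset_rfl] at h
      exact (h hx).trans (le_mul_of_one_le_left hκ (by exact_mod_cast Nat.one_le_pow _ _ hn₀))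
    exact (mul_nonpos_of_nonneg_of_nonpos (by positivity) (sub_nonpos.2 hle)).trans
      (hN.splitNorm_nonneg _ _)
  · have hpiece (E) (hE : E ∈ P) :
        (3 / 2) ^ d * (N (proj E x) - (n₀ ^ d : ℕ) * κ) ≤ splitNorm N (n₀ ^ d) (proj E x) := by
      refine ih fun F hF hTF => ?_
      rw [support_proj_of_subset (hP.subset_support hE)] at hF
      rw [proj_proj_of_subset hF] at hTF ⊢
      exact hT F (hF.trans (hP.subset_support hE)) hTF
    have hgain : 3 / 2 * N x ≤ ∑ E ∈ P, N (proj E x) :=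
      (mul_le_mul_of_nonneg_right (three_halves_le_flog hP.two_le_card) (hN.nonneg x)).trans
        hP.le_sum
    have hloss : P.card * ((n₀ ^ d : ℕ) * κ) ≤ 3 / 2 * ((n₀ ^ (d + 1) : ℕ) * κ) := by
      have : (P.card : ℝ) ≤ n₀ := by exact_mod_cast hcard
      have h0 : 0 ≤ (n₀ ^ d : ℕ) * κ := by positivity
      push_cast [pow_succ] at h0 ⊢
      nlinarith
    calc (3 / 2) ^ (d + 1) * (N x - (n₀ ^ (d + 1) : ℕ) * κ)
        ≤ (3 / 2) ^ d * (∑ E ∈ P, N (proj E x) - P.card * ((n₀ ^ d : ℕ) * κ)) := by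
          rw [pow_succ, mul_assoc]
          gcongr
          linarith
      _ = ∑ E ∈ P, (3 / 2) ^ d * (N (proj E x) - (n₀ ^ d : ℕ) * κ) := by
          rw [← Finset.mul_sum, Finset.sum_sub_distrib, Finset.sum_const, nsmul_eq_mul]
      _ ≤ ∑ E ∈ P, splitNorm N (n₀ ^ d) (proj E x) := Finset.sum_le_sum hpiece
      _ ≤ splitNorm N (∑ _ ∈ P, n₀ ^ d) x := hN.sum_splitNorm_proj_le hP.separatedOn _ x
      _ ≤ splitNorm N (n₀ ^ (d + 1)) x := by
          refine splitNorm_mono N ?_ x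
          rw [Finset.sum_const, smul_eq_mul, pow_succ']
          exact Nat.mul_le_mul_right _ hcard

lemma exists_tame_or_isOptimal_card_le (hN : IsSchlumprechtNorm N) :
    ∃ n₀ : ℕ, 1 ≤ n₀ ∧ ∀ x, Tame N x ∨ ∃ P, IsOptimal N x P ∧ P.card ≤ n₀ := by
  obtain ⟨m, hm⟩ := exists_nat_ge (48 ^ 2 : ℝ)
  refine ⟨2 ^ m, Nat.one_le_two_pow, fun x => ?_⟩
  rcases hN.supAttained_or_exists_isOptimal x with hsup | ⟨P, hP⟩
  · exact .inl (.inl hsup)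
  by_cases hcard : P.card ≤ 2 ^ m
  · exact .inr ⟨P, hP, hcard⟩
  · exact .inl (.inr ⟨P, hP, hm.trans ((le_flog_two_pow m).trans
      (flog_natCast_le_flog (not_le.1 hcard).le))⟩)

lemma exists_tame_proj (hN : IsSchlumprechtNorm N) :
    ∃ m : ℕ, 0 < m ∧ ∀ x, ∃ E, Tame N (proj E x) ∧ N x ≤ m * N (proj E x) := by
  obtain ⟨n₀, hn₀, hsplit⟩ := hN.exists_tame_or_isOptimal_card_le
  obtain ⟨d, hd⟩ := exists_two_mul_flog_pow_le n₀
  set n := n₀ ^ d with hn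
  have hnpos : 0 < n := Nat.pow_pos hn₀
  have h4n : (0 : ℝ) < 4 * n := by exact_mod_cast Nat.mul_pos four_pos hnpos
  refine ⟨4 * n, by positivity, fun x => ?_⟩
  by_contra! hsmall
  have hxpos : 0 < N x := by
    have htame : Tame N (proj ∅ x) := .inl ⟨0, by simp [proj_empty, hN.zero]⟩
    simpa [proj_empty, hN.zero] using hsmall ∅ htame
  have hκ (E : Finset ℕ) (hE : Tame N (proj E x)) : N (proj E x) ≤ N x / (4 * n) := by
    have h := hsmall E hE
    rw [le_div_iff₀ h4n]
    push_cast at h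
    linarith
  have hlower := hN.three_halves_pow_mul_le_splitNorm hn₀ hsplit (div_pos hxpos h4n).le d
    fun E _ => hκ E
  have hupper := hN.splitNorm_le n x
  rw [← hn] at hlower
  have hκn : n * (N x / (4 * n)) = N x / 4 := by
    rw [← mul_div_assoc, mul_comm 4, mul_div_mul_left _ _ (Nat.cast_ne_zero.2 hnpos.ne')]
  rw [hκn] at hlower
  have hgrow : 2 * flog n * N x ≤ (3 / 2) ^ d * N x := mul_le_mul_of_nonneg_right hd hxpos.le
  have hpos : 0 < (3 / 2) ^ d * N x := by positivity
  linarith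

lemma exists_slackNormed (hN : IsSchlumprechtNorm N) :
    ∃ θ > 0, ∀ x, SlackNormed N θ x := by
  obtain ⟨m, hm, hE⟩ := hN.exists_tame_proj
  have hm' : (0 : ℝ) < m := Nat.cast_pos.2 hm
  refine ⟨1 / (2 * m), one_div_pos.2 (mul_pos two_pos hm'), fun x => ?_⟩
  obtain ⟨E, htame, hle⟩ := hE x
  refine (htame.slackNormed hN).of_proj ?_
  rw [div_mul_eq_mul_div, one_mul, div_le_iff₀ (mul_pos two_pos hm')]
  linarith

end IsSchlumprechtNorm

/-! ### Linear combinations of successive vectors -/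

/-- The supports of the vectors `u 0, u 1, …` lie one after another; zero vectors are allowed. -/
def Successive (u : ℕ → c00) : Prop := ∀ l l', l < l' → FLt (u l).support (u l').support

/-- The linear combination of the vectors `u l`, `l ∈ A`, with coefficients `a`. -/
noncomputable def blockSum (u : ℕ → c00) (a : ℕ → ℝ) (A : Finset ℕ) : c00 := ∑ l ∈ A, a l • u l

/-- The union of the supports of the vectors `u l`, `l ∈ B`. -/
def blockSupport (u : ℕ → c00) (B : Finset ℕ) : Finset ℕ := B.biUnion fun l => (u l).support

lemma blockSum_singleton (u : ℕ → c00) (a : ℕ → ℝ) (l : ℕ) : blockSum u a {l} = a l • u l :=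
  Finset.sum_singleton _ _

lemma blockSum_filter_add_filter_not (u : ℕ → c00) (a : ℕ → ℝ) (A : Finset ℕ) (p : ℕ → Prop)
    [DecidablePred p] :
    blockSum u a (A.filter p) + blockSum u a (A.filter (¬p ·)) = blockSum u a A :=
  Finset.sum_filter_add_sum_filter_not _ _ _

lemma map_blockSum (φ : c00 →ₗ[ℝ] ℝ) (u : ℕ → c00) (a : ℕ → ℝ) (A : Finset ℕ) :
    φ (blockSum u a A) = ∑ l ∈ A, a l * φ (u l) := by
  simp [blockSum]

lemma IsBlockSeq.successive {u : ℕ → c00} (hu : IsBlockSeq u) : Successive u := by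
  intro l l' hll'
  induction l', hll' using Nat.le_induction with
  | base => exact hu.2 l
  | succ l' _ ih =>
    obtain ⟨b, hb⟩ := Finsupp.support_nonempty_iff.2 (hu.1 l')
    exact fun i hi j hj => (ih i hi b hb).trans (hu.2 l' b hb j hj)

namespace Successive

variable {N : c00 → ℝ} {u v : ℕ → c00} {a : ℕ → ℝ} {A B : Finset ℕ}

lemma comp (hu : Successive u) {s : ℕ → ℕ} (hs : StrictMono s) : Successive fun l => u (s l) :=
  fun _ _ h => hu _ _ (hs h)

lemma le_of_mem_support (hu : Successive u) {l l' i j : ℕ} (hi : i ∈ (u l).support)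
    (hj : j ∈ (u l').support) (hij : i < j) : l ≤ l' :=
  le_of_not_gt fun h => (hu _ _ h j hj i hi).asymm hij

lemma disjoint_support (hu : Successive u) {l l' : ℕ} (h : l ≠ l') :
    Disjoint (u l).support (u l').support :=
  Separated.disjoint (h.lt_or_gt.imp (hu _ _) (hu _ _))

lemma separated_blockSupport (hu : Successive u) (h : Separated A B) :
    Separated (blockSupport u A) (blockSupport u B) := by
  have hlt {A B : Finset ℕ} (h : FLt A B) : FLt (blockSupport u A) (blockSupport u B) := by
    intro i hi j hj
    obtain ⟨l, hl, hil⟩ := Finset.mem_biUnion.1 hi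
    obtain ⟨l', hl', hjl'⟩ := Finset.mem_biUnion.1 hj
    exact hu l l' (h l hl l' hl') i hil j hjl'
  exact h.imp hlt hlt

lemma proj_blockSum (hu : Successive u) (a : ℕ → ℝ) (hBA : B ⊆ A) :
    proj (blockSupport u B) (blockSum u a A) = blockSum u a B := by
  have hterm (l : ℕ) : proj (blockSupport u B) (a l • u l) = if l ∈ B then a l • u l else 0 := by
    rw [proj_smul]
    split_ifs with hl
    · have hsub : (u l).support ⊆ blockSupport u B :=
        Finset.subset_biUnion_of_mem (fun l => (u l).support) hl
      rw [proj_eq_self hsub]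
    · rw [proj_eq_zero, smul_zero]
      exact (Finset.disjoint_biUnion_left _ _ _).2 fun l' hl' =>
        hu.disjoint_support (ne_of_mem_of_not_mem hl' hl)
  simp only [blockSum, proj_sum, hterm]
  rw [Finset.sum_ite_mem, Finset.inter_eq_right.2 hBA]

lemma norm_blockSum_mono (hN : IsSchlumprechtNorm N) (hu : Successive u) (a : ℕ → ℝ)
    (hBA : B ⊆ A) : N (blockSum u a B) ≤ N (blockSum u a A) := by
  rw [← hu.proj_blockSum a hBA]
  exact hN.proj_le _ _

lemma abs_le_norm_blockSum (hN : IsSchlumprechtNorm N) (hu : Successive u) (a : ℕ → ℝ) {l : ℕ}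
    (hul : N (u l) = 1) (hl : l ∈ A) : |a l| ≤ N (blockSum u a A) := by
  have h := hu.norm_blockSum_mono hN a (Finset.singleton_subset_iff.2 hl)
  rwa [blockSum_singleton, hN.smul, hul, mul_one] at h

lemma abs_blockSum_apply_le (hN : IsSchlumprechtNorm N) (hu : Successive u) (hv : Successive v)
    (hu1 : ∀ l, N (u l) = 1) (hv1 : ∀ l, N (v l) = 1) (a : ℕ → ℝ) (A : Finset ℕ) (i : ℕ) :
    |blockSum v a A i| ≤ N (blockSum u a A) := by
  by_cases hi : ∃ l ∈ A, i ∈ (v l).support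
  · obtain ⟨l, hl, hil⟩ := hi
    have hvi : blockSum v a A i = a l * v l i := by
      have h := DFunLike.congr_fun (hv.proj_blockSum a (Finset.singleton_subset_iff.2 hl)) i
      rwa [proj_apply, if_pos (by simpa [blockSupport] using hil), blockSum_singleton] at h
    rw [hvi, abs_mul]
    exact (mul_le_of_le_one_right (abs_nonneg _) ((hN.abs_apply_le _ i).trans (hv1 l).le)).trans
      (hu.abs_le_norm_blockSum hN a (hu1 l) hl)
  · push Not at hi
    have hzero : blockSum v a A i = 0 := by
      rw [blockSum, Finsupp.finsetSum_apply]
      exact Finset.sum_eq_zero fun l hl => by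
        rw [Finsupp.smul_apply, Finsupp.notMem_support_iff.1 (hi l hl), smul_zero]
    rw [hzero, abs_zero]
    exact hN.nonneg _

lemma sum_splitNorm_blockSum_le (hN : IsSchlumprechtNorm N) (hu : Successive u) (a : ℕ → ℝ)
    {ι : Type*} {s : Finset ι} {K : ι → Finset ℕ} (hK : SeparatedOn s K)
    (hKA : ∀ j ∈ s, K j ⊆ A) (d : ι → ℕ) :
    ∑ j ∈ s, splitNorm N (d j) (blockSum u a (K j)) ≤
      splitNorm N (∑ j ∈ s, d j) (blockSum u a A) := by
  have hsep : SeparatedOn s fun j => blockSupport u (K j) :=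
    fun j hj j' hj' hne => hu.separated_blockSupport (hK hj hj' hne)
  refine le_trans (Finset.sum_le_sum fun j hj => ?_) (hN.sum_splitNorm_proj_le hsep d _)
  rw [hu.proj_blockSum a (hKA j hj)]

lemma norm_blockSum_filter_lt_add_le (hN : IsSchlumprechtNorm N) (hu : Successive u) (a : ℕ → ℝ)
    (A : Finset ℕ) (b : ℕ) :
    N (blockSum u a (A.filter (· < b))) + N (blockSum u a (A.filter (¬· < b))) ≤
      splitNorm N 2 (blockSum u a A) := by
  set K : Bool → Finset ℕ := fun c => if c then A.filter (· < b) else A.filter (¬· < b)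
  have hlt : FLt (K true) (K false) := fun l hl l' hl' =>
    (Finset.mem_filter.1 hl).2.trans_le (not_lt.1 (Finset.mem_filter.1 hl').2)
  have hK : SeparatedOn Finset.univ K := by
    rintro (_ | _) - (_ | _) - hne
    exacts [absurd rfl hne, .inr hlt, .inl hlt, absurd rfl hne]
  have hKA : ∀ c ∈ Finset.univ, K c ⊆ A := by
    rintro (_ | _) - <;> exact Finset.filter_subset _ _
  have h := hu.sum_splitNorm_blockSum_le hN a hK hKA fun _ => 1
  rw [Fintype.sum_bool] at h
  exact (add_le_add (hN.le_splitNorm le_rfl _) (hN.le_splitNorm le_rfl _)).trans h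

end Successive

/-! ### Comparing two sequences through slack functionals -/

/-- The indices of those sets `E p`, `p ∈ s`, that meet the support of `y`. -/
def touching {ι : Type*} (s : Finset ι) (E : ι → Finset ℕ) (y : c00) : Finset ι :=
  s.filter fun p => ¬Disjoint (E p) y.support

/-- The `l ∈ A` for which `v l` is touched by at least two of the sets `E p`, `p ∈ s`. -/
def splitIndices {ι : Type*} (s : Finset ι) (E : ι → Finset ℕ) (v : ℕ → c00) (A : Finset ℕ) :
    Finset ℕ :=
  A.filter fun l => 1 < (touching s E (v l)).card

open Classical in
/-- The `l ∈ A` for which `E p` is the only one of the sets `E q`, `q ∈ s`, touching `v l`. -/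
noncomputable def soleIndices {ι : Type*} (s : Finset ι) (E : ι → Finset ℕ) (v : ℕ → c00)
    (A : Finset ℕ) (p : ι) : Finset ℕ :=
  A.filter fun l => touching s E (v l) = {p}

section touching

variable {ι : Type*} {N : c00 → ℝ} {u v : ℕ → c00} {s : Finset ι} {E : ι → Finset ℕ}
  {φ : ι → c00 →ₗ[ℝ] ℝ} {A : Finset ℕ}

lemma mem_touching {y : c00} {p : ι} :
    p ∈ touching s E y ↔ p ∈ s ∧ ¬Disjoint (E p) y.support := Finset.mem_filter

lemma mem_splitIndices {l : ℕ} :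
    l ∈ splitIndices s E v A ↔ l ∈ A ∧ 1 < (touching s E (v l)).card := Finset.mem_filter

lemma mem_soleIndices {p : ι} {l : ℕ} :
    l ∈ soleIndices s E v A p ↔ l ∈ A ∧ touching s E (v l) = {p} := by
  simp [soleIndices]

lemma not_disjoint_of_mem_soleIndices {p : ι} {l : ℕ} (hl : l ∈ soleIndices s E v A p) :
    ¬Disjoint (E p) (v l).support :=
  (mem_touching.1 ((mem_soleIndices.1 hl).2 ▸ Finset.mem_singleton_self p)).2

lemma exists_ne_of_mem_splitIndices {l : ℕ} (hl : l ∈ splitIndices s E v A) (p : ι) :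
    ∃ q ∈ s, q ≠ p ∧ ¬Disjoint (E q) (v l).support := by
  obtain ⟨q, hq, hqp⟩ := Finset.exists_mem_ne (mem_splitIndices.1 hl).2 p
  exact ⟨q, (mem_touching.1 hq).1, hqp, (mem_touching.1 hq).2⟩

lemma Successive.le_of_not_disjoint (hv : Successive v) {B B' : Finset ℕ} (h : FLt B B')
    {l l' : ℕ} (hl : ¬Disjoint B (v l).support) (hl' : ¬Disjoint B' (v l').support) : l ≤ l' := by
  obtain ⟨i, hiB, hi⟩ := Finset.not_disjoint_iff.1 hl
  obtain ⟨j, hjB, hj⟩ := Finset.not_disjoint_iff.1 hl'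
  exact hv.le_of_mem_support hi hj (h i hiB j hjB)

lemma Successive.separated_of_not_disjoint (hv : Successive v) {B B' K K' : Finset ℕ}
    (h : Separated B B') (hK : ∀ l ∈ K, ¬Disjoint B (v l).support)
    (hK' : ∀ l ∈ K', ¬Disjoint B' (v l).support) (hdisj : Disjoint K K') : Separated K K' := by
  rcases h with h | h
  · exact .inl fun l hl l' hl' => (hv.le_of_not_disjoint h (hK l hl) (hK' l' hl')).lt_of_ne
      fun heq => Finset.disjoint_left.1 hdisj hl (heq ▸ hl')
  · exact .inr fun l' hl' l hl => (hv.le_of_not_disjoint h (hK' l' hl') (hK l hl)).lt_of_ne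
      fun heq => Finset.disjoint_left.1 hdisj hl (heq ▸ hl')

lemma separatedOn_soleIndices_splitIndices (hv : Successive v) (hE : SeparatedOn s E)
    (A : Finset ℕ) :
    SeparatedOn (s.disjSum (splitIndices s E v A)) (Sum.elim (soleIndices s E v A) ({·})) := by
  have hmixed (p) (hp : p ∈ s) (l) (hl : l ∈ splitIndices s E v A) :
      Separated (soleIndices s E v A p) {l} := by
    obtain ⟨q, hq, hqp, hql⟩ := exists_ne_of_mem_splitIndices hl p
    refine hv.separated_of_not_disjoint (hE hp hq hqp.symm)
      (fun _ => not_disjoint_of_mem_soleIndices) (by simpa using hql) ?_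
    rw [Finset.disjoint_singleton_right, mem_soleIndices]
    rintro ⟨-, hsole⟩
    simpa [hsole] using (mem_splitIndices.1 hl).2
  rintro (p | l) hi (q | l') hj hne <;>
    simp only [Finset.mem_coe, Finset.inl_mem_disjSum, Finset.inr_mem_disjSum] at hi hj
  · refine hv.separated_of_not_disjoint (hE hi hj fun h => hne (congrArg _ h))
      (fun _ => not_disjoint_of_mem_soleIndices) (fun _ => not_disjoint_of_mem_soleIndices)
      (Finset.disjoint_left.2 fun l hp hq => hne ?_)
    rw [Finset.singleton_injective ((mem_soleIndices.1 hp).2.symm.trans (mem_soleIndices.1 hq).2)]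
  · exact hmixed p hi l' hj
  · exact (hmixed q hj l hi).symm
  · have hll' : l ≠ l' := fun h => hne (congrArg _ h)
    simpa [Separated, FLt] using hll'.lt_or_gt

-- A split index strictly between two others touching `E p` would be touched by `E p` alone.
lemma card_filter_splitIndices_le_two (hv : Successive v) (hE : SeparatedOn s E) (A : Finset ℕ)
    {p : ι} (hp : p ∈ s) :
    ((splitIndices s E v A).filter fun l => ¬Disjoint (E p) (v l).support).card ≤ 2 := by
  set T := (splitIndices s E v A).filter fun l => ¬Disjoint (E p) (v l).support
  rcases T.eq_empty_or_nonempty with hT | hT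
  · simp [hT]
  refine (Finset.card_le_card (t := {T.min' hT, T.max' hT}) fun l hl => ?_).trans
    Finset.card_le_two
  have hmin := (Finset.mem_filter.1 (T.min'_mem hT)).2
  have hmax := (Finset.mem_filter.1 (T.max'_mem hT)).2
  obtain ⟨q, hq, hqp, hql⟩ := exists_ne_of_mem_splitIndices (Finset.mem_filter.1 hl).1 p
  rw [Finset.mem_insert, Finset.mem_singleton]
  rcases hE hp hq hqp.symm with h | h
  · exact .inr ((T.le_max' l hl).antisymm (hv.le_of_not_disjoint h hmax hql))
  · exact .inl ((hv.le_of_not_disjoint h hql hmin).antisymm (T.min'_le l hl))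

lemma sum_card_touching_le (hv : Successive v) (hE : SeparatedOn s E) (A : Finset ℕ) :
    ∑ l ∈ splitIndices s E v A, (touching s E (v l)).card ≤ 2 * s.card := by
  calc ∑ l ∈ splitIndices s E v A, (touching s E (v l)).card
      = ∑ p ∈ s, ((splitIndices s E v A).filter fun l => ¬Disjoint (E p) (v l).support).card :=
        Finset.sum_card_bipartiteAbove_eq_sum_card_bipartiteBelow
          fun l p => ¬Disjoint (E p) (v l).support
    _ ≤ s.card • 2 :=
        Finset.sum_le_card_nsmul _ _ _ fun _ hp => card_filter_splitIndices_le_two hv hE A hp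
    _ = 2 * s.card := mul_comm _ _

lemma abs_sum_apply_le_splitNorm (hN : IsSchlumprechtNorm N) (hE : SeparatedOn s E)
    (hφ : ∀ p ∈ s, SlackFunctional (E p) (φ p)) (y : c00) :
    |∑ p ∈ s, φ p y| ≤ splitNorm N (touching s E y).card y := by
  have hsub : touching s E y ⊆ s := Finset.filter_subset _ _
  calc |∑ p ∈ s, φ p y| = |∑ p ∈ touching s E y, φ p y| := by
        rw [Finset.sum_subset hsub fun p hp hpy => (hφ p hp).apply_eq_zero ?_]
        by_contra h
        exact hpy (mem_touching.2 ⟨hp, h⟩)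
    _ ≤ ∑ p ∈ touching s E y, |φ p y| := Finset.abs_sum_le_sum_abs _ _
    _ ≤ ∑ p ∈ touching s E y, N (proj (E p) y) :=
        Finset.sum_le_sum fun p hp => (hφ p (hsub hp)).abs_apply_le hN y
    _ ≤ splitNorm N (touching s E y).card y :=
        hN.sum_proj_le_splitNorm (hE.subset hsub) le_rfl y

lemma sum_apply_blockSum_le_sum_splitNorm (hN : IsSchlumprechtNorm N) (hE : SeparatedOn s E)
    (hφ : ∀ p ∈ s, SlackFunctional (E p) (φ p)) {n : ℕ} (hs : s.card ≤ n) (v : ℕ → c00)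
    (a : ℕ → ℝ) (A : Finset ℕ) :
    ∑ p ∈ s, φ p (blockSum v a A) ≤ ∑ l ∈ A, |a l| * splitNorm N n (v l) := by
  simp only [map_blockSum]
  rw [Finset.sum_comm]
  refine Finset.sum_le_sum fun l _ => ?_
  rw [← Finset.mul_sum]
  refine (le_abs_self _).trans ((abs_mul _ _).trans_le ?_)
  refine mul_le_mul_of_nonneg_left ?_ (abs_nonneg _)
  exact (abs_sum_apply_le_splitNorm hN hE hφ (v l)).trans
    (splitNorm_mono N ((Finset.card_filter_le _ _).trans hs) _)

lemma sum_apply_blockSum_eq (hφ : ∀ p ∈ s, SlackFunctional (E p) (φ p)) (v : ℕ → c00)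
    (a : ℕ → ℝ) (A : Finset ℕ) :
    ∑ p ∈ s, φ p (blockSum v a A) = ∑ p ∈ s, φ p (blockSum v a (soleIndices s E v A p)) +
      ∑ l ∈ splitIndices s E v A, a l * ∑ p ∈ s, φ p (v l) := by
  have hpiece (p) (hp : p ∈ s) : φ p (blockSum v a A) =
      φ p (blockSum v a (soleIndices s E v A p)) +
        ∑ l ∈ splitIndices s E v A, a l * φ p (v l) := by
    classical
    simp only [map_blockSum, soleIndices, splitIndices, Finset.sum_filter]
    rw [← Finset.sum_add_distrib]
    refine Finset.sum_congr rfl fun l _ => ?_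
    by_cases hpl : Disjoint (E p) (v l).support
    · simp [(hφ p hp).apply_eq_zero hpl]
    · have hmem : p ∈ touching s E (v l) := mem_touching.2 ⟨hp, hpl⟩
      have hiff : 1 < (touching s E (v l)).card ↔ touching s E (v l) ≠ {p} :=
        Finset.one_lt_card_iff_nontrivial.trans (Finset.nontrivial_iff_ne_singleton hmem)
      by_cases hsole : touching s E (v l) = {p} <;> simp [hiff, hsole]
  rw [Finset.sum_congr rfl hpiece, Finset.sum_add_distrib, Finset.sum_comm]
  simp only [Finset.mul_sum]

lemma sum_apply_blockSum_le (hN : IsSchlumprechtNorm N) (hu : Successive u) (hv : Successive v)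
    {C : ℝ} (hC : 0 ≤ C) (a : ℕ → ℝ) (hE : SeparatedOn s E)
    (hφ : ∀ p ∈ s, SlackFunctional (E p) (φ p))
    (hvu : ∀ l ∈ A, ∀ d ≤ s.card, splitNorm N d (v l) ≤ C * splitNorm N d (u l))
    (hφvu : ∀ p ∈ s, ∀ B, φ p (blockSum v a B) ≤ C * splitNorm N 2 (blockSum u a B)) :
    ∑ p ∈ s, φ p (blockSum v a A) ≤ C * splitNorm N (4 * s.card) (blockSum u a A) := by
  set d : ι ⊕ ℕ → ℕ := Sum.elim (fun _ => 2) fun l => (touching s E (v l)).card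
  set K : ι ⊕ ℕ → Finset ℕ := Sum.elim (soleIndices s E v A) ({·})
  have hKA : ∀ j ∈ s.disjSum (splitIndices s E v A), K j ⊆ A := by
    rintro (p | l) hj
    · exact fun l hl => (mem_soleIndices.1 hl).1
    · exact Finset.singleton_subset_iff.2 (mem_splitIndices.1 (Finset.inr_mem_disjSum.1 hj)).1
  have hd : ∑ j ∈ s.disjSum (splitIndices s E v A), d j ≤ 4 * s.card := by
    have h := sum_card_touching_le hv hE A
    simp only [Finset.sum_disjSum, d, Sum.elim_inl, Sum.elim_inr, Finset.sum_const, smul_eq_mul]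
    omega
  have hsplit (l) (hl : l ∈ splitIndices s E v A) : a l * ∑ p ∈ s, φ p (v l) ≤
      C * splitNorm N (touching s E (v l)).card (blockSum u a {l}) := by
    rw [blockSum_singleton, hN.splitNorm_smul, mul_left_comm]
    refine (le_abs_self _).trans ((abs_mul _ _).trans_le ?_)
    refine mul_le_mul_of_nonneg_left ?_ (abs_nonneg _)
    exact (abs_sum_apply_le_splitNorm hN hE hφ (v l)).trans
      (hvu l (mem_splitIndices.1 hl).1 _ (Finset.card_filter_le _ _))
  calc ∑ p ∈ s, φ p (blockSum v a A)
      ≤ ∑ p ∈ s, C * splitNorm N 2 (blockSum u a (soleIndices s E v A p)) +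
          ∑ l ∈ splitIndices s E v A,
            C * splitNorm N (touching s E (v l)).card (blockSum u a {l}) := by
        rw [sum_apply_blockSum_eq hφ]
        exact add_le_add (Finset.sum_le_sum fun p hp => hφvu p hp _) (Finset.sum_le_sum hsplit)
    _ = C * ∑ j ∈ s.disjSum (splitIndices s E v A), splitNorm N (d j) (blockSum u a (K j)) := by
        rw [Finset.sum_disjSum, mul_add, Finset.mul_sum, Finset.mul_sum]
        rfl
    _ ≤ C * splitNorm N (4 * s.card) (blockSum u a A) :=
        mul_le_mul_of_nonneg_left ((hu.sum_splitNorm_blockSum_le hN a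
          (separatedOn_soleIndices_splitIndices hv hE A) hKA d).trans (splitNorm_mono N hd _)) hC

end touching

/-- For each `m`, the head `l < b` of the sequence `v` contributes at most `C` times the norm of
`u`-combinations to splittings into `m` pieces, while on the tail the splittings of each single
`v l` into at most `m` pieces are at most `C` times as large as those of `u l`. -/
def SplitDominates (N : c00 → ℝ) (C : ℝ) (u v : ℕ → c00) : Prop :=
  ∀ m : ℕ, ∃ b : ℕ,
    (∀ (A : Finset ℕ) (a : ℕ → ℝ), (∀ l ∈ A, l < b) →
      ∑ l ∈ A, |a l| * splitNorm N m (v l) ≤ C * (flog m * N (blockSum u a A))) ∧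
    ∀ l, b ≤ l → ∀ d ≤ m, splitNorm N d (v l) ≤ C * splitNorm N d (u l)

namespace SplitDominates

variable {N : c00 → ℝ} {C : ℝ} {u v : ℕ → c00}

lemma apply_blockSum_le (hN : IsSchlumprechtNorm N) (hu : Successive u) (hv : Successive v)
    (hu1 : ∀ l, N (u l) = 1) (hv1 : ∀ l, N (v l) = 1) (hC : 1 ≤ C)
    (h : SplitDominates N C u v) (a : ℕ → ℝ) {E : Finset ℕ} {φ : c00 →ₗ[ℝ] ℝ}
    (hφ : SlackFunctional E φ) (A : Finset ℕ) :
    φ (blockSum v a A) ≤ C * splitNorm N 2 (blockSum u a A) := by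
  have hC0 : 0 ≤ C := zero_le_one.trans hC
  induction hφ generalizing A with
  | @coord i ε hε =>
    calc ε * blockSum v a A i ≤ |ε * blockSum v a A i| := le_abs_self _
      _ ≤ |blockSum v a A i| := by
        rw [abs_mul]; exact mul_le_of_le_one_left (abs_nonneg _) hε
      _ ≤ N (blockSum u a A) := hu.abs_blockSum_apply_le hN hv hu1 hv1 a A i
      _ ≤ splitNorm N 2 (blockSum u a A) := hN.le_splitNorm one_le_two _
      _ ≤ C * splitNorm N 2 (blockSum u a A) :=
        le_mul_of_one_le_left (hN.splitNorm_nonneg _ _) hC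
  | @node ι n s E φ hs hE hφ ih =>
    obtain ⟨b, hhead, htail⟩ := h n
    set A₁ := A.filter (· < b)
    set A₂ := A.filter (¬· < b)
    have hflog : 0 ≤ flog (4 * n : ℕ) := flog_natCast_nonneg _
    have h₁ : ∑ p ∈ s, φ p (blockSum v a A₁) ≤ C * (flog (4 * n : ℕ) * N (blockSum u a A₁)) :=
      (sum_apply_blockSum_le_sum_splitNorm hN hE hφ hs v a A₁).trans <|
        (hhead A₁ a fun l hl => (Finset.mem_filter.1 hl).2).trans <|
          mul_le_mul_of_nonneg_left (mul_le_mul_of_nonneg_right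
            (flog_natCast_le_flog (by omega)) (hN.nonneg _)) hC0
    have h₂ : ∑ p ∈ s, φ p (blockSum v a A₂) ≤ C * (flog (4 * n : ℕ) * N (blockSum u a A₂)) := by
      refine (sum_apply_blockSum_le hN hu hv hC0 a hE hφ (fun l hl d hd =>
        htail l (not_lt.1 (Finset.mem_filter.1 hl).2) d (hd.trans hs)) ih).trans ?_
      exact mul_le_mul_of_nonneg_left ((splitNorm_mono N (by omega) _).trans
        (hN.splitNorm_le _ _)) hC0
    rw [LinearMap.smul_apply, LinearMap.sum_apply, smul_eq_mul]
    refine inv_mul_le_of_le_mul₀ hflog (mul_nonneg hC0 (hN.splitNorm_nonneg _ _)) ?_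
    calc ∑ p ∈ s, φ p (blockSum v a A)
        = ∑ p ∈ s, φ p (blockSum v a A₁) + ∑ p ∈ s, φ p (blockSum v a A₂) := by
          simp only [← Finset.sum_add_distrib, ← map_add, A₁, A₂, blockSum_filter_add_filter_not]
      _ ≤ flog (4 * n : ℕ) * (C * (N (blockSum u a A₁) + N (blockSum u a A₂))) := by linarith
      _ ≤ flog (4 * n : ℕ) * (C * splitNorm N 2 (blockSum u a A)) :=
          mul_le_mul_of_nonneg_left (mul_le_mul_of_nonneg_left
            (hu.norm_blockSum_filter_lt_add_le hN a A b) hC0) hflog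

end SplitDominates

lemma IsSchlumprechtNorm.exists_norm_blockSum_le {N : c00 → ℝ} (hN : IsSchlumprechtNorm N) :
    ∃ D, 1 ≤ D ∧ ∀ {C : ℝ} {u v : ℕ → c00}, 1 ≤ C → Successive u → Successive v →
      (∀ l, N (u l) = 1) → (∀ l, N (v l) = 1) → SplitDominates N C u v →
      ∀ (a : ℕ → ℝ) (A : Finset ℕ), N (blockSum v a A) ≤ D * C * N (blockSum u a A) := by
  obtain ⟨θ, hθ, hslack⟩ := hN.exists_slackNormed
  refine ⟨max 1 (2 / θ), le_max_left _ _, fun {C u v} hC hu hv hu1 hv1 h a A => ?_⟩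
  obtain ⟨E, φ, hφ, -, hle⟩ := hslack (blockSum v a A)
  have hnonneg : 0 ≤ C * N (blockSum u a A) :=
    mul_nonneg (zero_le_one.trans hC) (hN.nonneg _)
  have hbound : θ * N (blockSum v a A) ≤ 2 * (C * N (blockSum u a A)) := by
    calc θ * N (blockSum v a A) ≤ φ (blockSum v a A) := hle
      _ ≤ C * splitNorm N 2 (blockSum u a A) := h.apply_blockSum_le hN hu hv hu1 hv1 hC a hφ A
      _ ≤ C * (2 * N (blockSum u a A)) :=
        mul_le_mul_of_nonneg_left ((hN.splitNorm_le _ _).trans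
          (mul_le_mul_of_nonneg_right flog_two_le_two (hN.nonneg _))) (zero_le_one.trans hC)
      _ = 2 * (C * N (blockSum u a A)) := mul_left_comm _ _ _
  calc N (blockSum v a A) ≤ 2 / θ * (C * N (blockSum u a A)) := by
        rwa [div_mul_eq_mul_div, le_div_iff₀' hθ]
    _ ≤ max 1 (2 / θ) * (C * N (blockSum u a A)) :=
        mul_le_mul_of_nonneg_right (le_max_right _ _) hnonneg
    _ = max 1 (2 / θ) * C * N (blockSum u a A) := (mul_assoc _ _ _).symm

/-! ### Stabilized sequences -/

/-- A normalized successive sequence whose splitting norms are nearly constant: up to a factor `2`,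
`splitNorm N d (y j)` equals `L d` as soon as `d ≤ M i` for some `i ≤ j`. The thresholds `M i` also
exceed the supports of the earlier vectors by so much that these cannot be split effectively. -/
structure Stabilized (N : c00 → ℝ) (y : ℕ → c00) (M : ℕ → ℕ) (L : ℕ → ℝ) : Prop where
  successive : Successive y
  norm_eq_one : ∀ j, N (y j) = 1
  strictMono : StrictMono M
  half_le_splitNorm : ∀ i j d, i ≤ j → d ≤ M i → L d / 2 ≤ splitNorm N d (y j)
  splitNorm_le_two_mul : ∀ i j d, i ≤ j → d ≤ M i → splitNorm N d (y j) ≤ 2 * L d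
  sum_card_support_le : ∀ i, ((∑ j ∈ Finset.range i, (y j).support.card : ℕ) : ℝ) ≤ flog (M i)

/-- Either `L` is comparable to `flog` at some place between `k i` and `M i`, for each `i`, or `L`
is negligible against `flog` at a rate controlled by `M`. -/
def GrowthDichotomy (k M : ℕ → ℕ) (L : ℕ → ℝ) (δ : ℝ) : Prop :=
  (∀ i, ∃ m ≤ M i, k i < m ∧ δ * flog m ≤ L m) ∨
    ∀ i m, M i ≤ m → L m ≤ flog m / (2 * (i + 1))

lemma exists_growthDichotomy (k : ℕ → ℕ) (L : ℕ → ℝ) :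
    ∃ (h : ℕ → ℕ) (δ : ℝ), 0 < δ ∧ ∀ M : ℕ → ℕ, (∀ i, h i ≤ M i) → GrowthDichotomy k M L δ := by
  by_cases hL : ∃ δ > 0, ∀ m₀ : ℕ, ∃ m ≥ m₀, δ * flog m ≤ L m
  · obtain ⟨δ, hδ, hL⟩ := hL
    choose g hg hgL using fun i => hL (k i + 1)
    exact ⟨g, δ, hδ, fun M hM => .inl fun i => ⟨g i, hM i, hg i, hgL i⟩⟩
  · push Not at hL
    choose g hg using fun i : ℕ => hL (1 / (2 * (i + 1))) (by positivity)
    refine ⟨g, 1, one_pos, fun M hM => .inr fun i m hm => ?_⟩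
    rw [← one_div_mul_eq_div]
    exact (hg i m ((hM i).trans hm)).le

lemma Successive.mul_sum_abs_le {N : c00 → ℝ} (hN : IsSchlumprechtNorm N) {u : ℕ → c00}
    (hu : Successive u) (a : ℕ → ℝ) {B : Finset ℕ} {m : ℕ} (hm : 1 ≤ m) (hB : B.card ≤ m) {η : ℝ}
    (hη : ∀ l ∈ B, η * flog m ≤ splitNorm N m (u l)) :
    η * ∑ l ∈ B, |a l| ≤ 2 * N (blockSum u a B) := by
  have hsep : SeparatedOn B ({·} : ℕ → Finset ℕ) := fun l _ l' _ hne => by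
    simpa [Separated, FLt] using hne.lt_or_gt
  have hcard : ∑ _l ∈ B, m ≤ m * m := by
    rw [Finset.sum_const, smul_eq_mul]
    exact Nat.mul_le_mul_right m hB
  have hflog : flog (m * m : ℕ) ≤ 2 * flog m := by
    have h := flog_mul_le m.cast_nonneg m.cast_nonneg
    push_cast; linarith
  refine le_of_mul_le_mul_right ?_ (zero_lt_one.trans_le (one_le_flog hm))
  calc η * (∑ l ∈ B, |a l|) * flog m = ∑ l ∈ B, |a l| * (η * flog m) := by
        rw [← Finset.sum_mul]; ring
    _ ≤ ∑ l ∈ B, splitNorm N m (blockSum u a {l}) := Finset.sum_le_sum fun l hl => by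
        rw [blockSum_singleton, hN.splitNorm_smul]
        exact mul_le_mul_of_nonneg_left (hη l hl) (abs_nonneg _)
    _ ≤ splitNorm N (m * m) (blockSum u a B) :=
        (hu.sum_splitNorm_blockSum_le hN a hsep (fun _ => Finset.singleton_subset_iff.2)
          fun _ => m).trans (splitNorm_mono N hcard _)
    _ ≤ flog (m * m : ℕ) * N (blockSum u a B) := hN.splitNorm_le _ _
    _ ≤ 2 * flog m * N (blockSum u a B) := mul_le_mul_of_nonneg_right hflog (hN.nonneg _)
    _ = 2 * N (blockSum u a B) * flog m := by ring

namespace Stabilized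

variable {N : c00 → ℝ} {y : ℕ → c00} {k M : ℕ → ℕ} {L : ℕ → ℝ} {δ X : ℝ} {s t : ℕ → ℕ}
  {a : ℕ → ℝ} {A : Finset ℕ} {i m : ℕ}

lemma splitNorm_le_flog (hN : IsSchlumprechtNorm N) (h : Stabilized N y M L) (m j : ℕ) :
    splitNorm N m (y j) ≤ flog m := by
  simpa [h.norm_eq_one] using hN.splitNorm_le m (y j)

lemma sum_le_of_lt (hN : IsSchlumprechtNorm N) (h : Stabilized N y M L) (ht : StrictMono t)
    (hm : M i ≤ m) (hX : 0 ≤ X) (ha : ∀ l ∈ A, |a l| ≤ X) (hA : ∀ l ∈ A, t l < i) :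
    ∑ l ∈ A, |a l| * splitNorm N m (y (t l)) ≤ flog m * X := by
  have hcard : ∑ l ∈ A, (y (t l)).support.card ≤ ∑ j ∈ Finset.range i, (y j).support.card := by
    rw [← Finset.sum_image (f := fun j => (y j).support.card) ht.injective.injOn]
    exact Finset.sum_le_sum_of_subset (Finset.image_subset_iff.2 fun l hl =>
      Finset.mem_range.2 (hA l hl))
  calc ∑ l ∈ A, |a l| * splitNorm N m (y (t l))
      ≤ ∑ l ∈ A, X * (y (t l)).support.card := Finset.sum_le_sum fun l hl =>
        mul_le_mul (ha l hl) (hN.splitNorm_le_card_support m (h.norm_eq_one _).le)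
          (hN.splitNorm_nonneg _ _) hX
    _ = X * (∑ l ∈ A, (y (t l)).support.card : ℕ) := by push_cast; rw [Finset.mul_sum]
    _ ≤ X * flog m := mul_le_mul_of_nonneg_left
        ((Nat.cast_le.2 hcard).trans ((h.sum_card_support_le i).trans (flog_natCast_le_flog hm))) hX
    _ = flog m * X := mul_comm _ _

lemma mul_sum_abs_le (hN : IsSchlumprechtNorm N) (h : Stabilized N y M L) (hs : StrictMono s)
    (hL : ∀ i, ∃ m ≤ M i, k i < m ∧ δ * flog m ≤ L m) (a : ℕ → ℝ)
    (hA : ∀ l ∈ A, A.card ≤ k l + 1) :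
    δ * ∑ l ∈ A, |a l| ≤ 4 * N (blockSum (fun l => y (s l)) a A) := by
  rcases A.eq_empty_or_nonempty with rfl | hne
  · simpa using hN.nonneg _
  obtain ⟨m, hmM, hkm, hmL⟩ := hL (A.min' hne)
  have hspread := (h.successive.comp hs).mul_sum_abs_le hN a (η := δ / 2) (by omega : 1 ≤ m)
    ((hA _ (A.min'_mem hne)).trans hkm) fun l hl => by
      have hhalf := h.half_le_splitNorm _ (s l) m ((A.min'_le l hl).trans hs.le_apply) hmM
      linarith
  linarith

lemma sum_le_of_le (hN : IsSchlumprechtNorm N) (h : Stabilized N y M L) (ht : StrictMono t)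
    (hm : m ≤ M (i + 1)) (hL : L m ≤ flog m / (2 * (i + 1))) (hX : 0 ≤ X)
    (ha : ∀ l ∈ A, |a l| ≤ X) (hcard : A.card ≤ i + 1) (hA : ∀ l ∈ A, i ≤ t l) :
    ∑ l ∈ A, |a l| * splitNorm N m (y (t l)) ≤ 2 * (flog m * X) := by
  have hfX : 0 ≤ flog m * X := mul_nonneg (flog_natCast_nonneg m) hX
  have hi : (0 : ℝ) < i + 1 := by positivity
  have heq : ∑ l ∈ A with t l = i, |a l| * splitNorm N m (y (t l)) ≤ flog m * X := by
    have hone : (A.filter (t · = i)).card ≤ 1 := Finset.card_le_one.2 fun l hl l' hl' =>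
      ht.injective ((Finset.mem_filter.1 hl).2.trans (Finset.mem_filter.1 hl').2.symm)
    refine (Finset.sum_le_card_nsmul _ _ (flog m * X) fun l hl => ?_).trans ?_
    · rw [mul_comm (flog m)]
      exact mul_le_mul (ha l (Finset.mem_filter.1 hl).1) (h.splitNorm_le_flog hN m _)
        (hN.splitNorm_nonneg _ _) hX
    · rw [nsmul_eq_mul]
      exact mul_le_of_le_one_left hfX (mod_cast hone)
  have hgt : ∑ l ∈ A with ¬t l = i, |a l| * splitNorm N m (y (t l)) ≤ flog m * X := by
    refine (Finset.sum_le_card_nsmul _ _ (X * (flog m / (i + 1))) fun l hl => ?_).trans ?_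
    · obtain ⟨hlA, hli⟩ := Finset.mem_filter.1 hl
      refine mul_le_mul (ha l hlA) ?_ (hN.splitNorm_nonneg _ _) hX
      calc splitNorm N m (y (t l)) ≤ 2 * L m :=
            h.splitNorm_le_two_mul (i + 1) _ m ((hA l hlA).lt_of_ne' hli) hm
        _ ≤ 2 * (flog m / (2 * (i + 1))) := mul_le_mul_of_nonneg_left hL two_pos.le
        _ = flog m / (i + 1) := by field_simp
    · have hcard' : ((A.filter (¬t · = i)).card : ℝ) ≤ i + 1 :=
        mod_cast (Finset.card_filter_le _ _).trans hcard
      calc (A.filter (¬t · = i)).card • (X * (flog m / (i + 1)))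
          ≤ (i + 1) * (X * (flog m / (i + 1))) := by
            rw [nsmul_eq_mul]
            exact mul_le_mul_of_nonneg_right hcard'
              (mul_nonneg hX (div_nonneg (flog_natCast_nonneg m) hi.le))
        _ = flog m * X := by field_simp
  rw [← Finset.sum_filter_add_sum_filter_not A (t · = i)]
  linarith

lemma sum_le (hN : IsSchlumprechtNorm N) (h : Stabilized N y M L)
    (hL : GrowthDichotomy k M L δ) (hδ : 0 < δ) (hs : StrictMono s) (ht : StrictMono t)
    (htk : ∀ l, t l ≤ k l) (hm : M i ≤ m) (hm' : m ≤ M (i + 1)) (a : ℕ → ℝ)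
    (hcard : A.card ≤ i + 1) :
    ∑ l ∈ A, |a l| * splitNorm N m (y (t l)) ≤
      (4 + 4 / δ) * (flog m * N (blockSum (fun l => y (s l)) a A)) := by
  have hu := h.successive.comp hs
  set X := N (blockSum (fun l => y (s l)) a A)
  have hX : 0 ≤ X := hN.nonneg _
  have hfX : 0 ≤ flog m * X := mul_nonneg (flog_natCast_nonneg m) hX
  have hδfX : 0 ≤ 4 / δ * (flog m * X) := mul_nonneg (by positivity) hfX
  have haX (l) (hl : l ∈ A) : |a l| ≤ X := hu.abs_le_norm_blockSum hN a (h.norm_eq_one _) hl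
  have hBA : A.filter (¬t · < i) ⊆ A := Finset.filter_subset _ _
  have hBcard := (Finset.card_le_card hBA).trans hcard
  have hBi (l) (hl : l ∈ A.filter (¬t · < i)) : i ≤ t l := not_lt.1 (Finset.mem_filter.1 hl).2
  have hhead : ∑ l ∈ A with t l < i, |a l| * splitNorm N m (y (t l)) ≤ flog m * X :=
    h.sum_le_of_lt hN ht hm hX (fun l hl => haX l (Finset.mem_filter.1 hl).1)
      fun l hl => (Finset.mem_filter.1 hl).2
  have htail : ∑ l ∈ A with ¬t l < i, |a l| * splitNorm N m (y (t l)) ≤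
      (3 + 4 / δ) * (flog m * X) := by
    rcases hL with hL | hL
    · have hspread := h.mul_sum_abs_le hN hs hL a fun l hl =>
        hBcard.trans (Nat.succ_le_succ ((hBi l hl).trans (htk l)))
      have hmono : N (blockSum (fun l => y (s l)) a (A.filter (¬t · < i))) ≤ X :=
        hu.norm_blockSum_mono hN a hBA
      have hsum : ∑ l ∈ A with ¬t l < i, |a l| ≤ 4 / δ * X := by
        rw [div_mul_eq_mul_div, le_div_iff₀' hδ]; linarith
      calc ∑ l ∈ A with ¬t l < i, |a l| * splitNorm N m (y (t l))
          ≤ (∑ l ∈ A with ¬t l < i, |a l|) * flog m := by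
            rw [Finset.sum_mul]
            exact Finset.sum_le_sum fun l _ =>
              mul_le_mul_of_nonneg_left (h.splitNorm_le_flog hN m _) (abs_nonneg _)
        _ ≤ 4 / δ * X * flog m := mul_le_mul_of_nonneg_right hsum (flog_natCast_nonneg m)
        _ ≤ (3 + 4 / δ) * (flog m * X) := by linarith
    · linarith [h.sum_le_of_le hN ht hm' (hL i m hm) hX (fun l hl => haX l (hBA hl)) hBcard hBi]
  rw [← Finset.sum_filter_add_sum_filter_not A (t · < i)]
  linarith

lemma splitDominates (hN : IsSchlumprechtNorm N) (h : Stabilized N y M L)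
    (hL : GrowthDichotomy k M L δ) (hδ : 0 < δ) (hs : StrictMono s) (ht : StrictMono t)
    (htk : ∀ l, t l ≤ k l) :
    SplitDominates N (4 + 4 / δ) (fun l => y (s l)) fun l => y (t l) := by
  have hδ' : 0 ≤ 4 / δ := by positivity
  intro m
  have hex : ∃ n, m ≤ M n := ⟨m, h.strictMono.le_apply⟩
  refine ⟨Nat.find hex, fun A a hA => ?_, fun l hl d hd => ?_⟩
  · rcases hn : Nat.find hex with _ | i
    · have hempty : A = ∅ := Finset.eq_empty_of_forall_notMem fun l hl => by
        simpa [hn] using hA l hl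
      simpa [hempty] using mul_nonneg (by linarith)
        (mul_nonneg (flog_natCast_nonneg m) (hN.nonneg _))
    · have hmi : M i < m := not_le.1 (Nat.find_min hex (hn ▸ Nat.lt_succ_self i))
      have hcard : A.card ≤ i + 1 := by
        simpa using Finset.card_le_card (fun l hl => Finset.mem_range.2 (hn ▸ hA l hl) :
          A ⊆ Finset.range (i + 1))
      exact h.sum_le hN hL hδ hs ht htk hmi.le (hn ▸ Nat.find_spec hex) a hcard
  · have hdM := hd.trans (Nat.find_spec hex)
    have hupper := h.splitNorm_le_two_mul _ (t l) d (hl.trans ht.le_apply) hdM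
    have hlower := h.half_le_splitNorm _ (s l) d (hl.trans hs.le_apply) hdM
    have hnonneg := mul_nonneg hδ' (hN.splitNorm_nonneg d (y (s l)))
    linarith

end Stabilized

/-! ### Extracting a stabilized subsequence -/

lemma exists_subseq_eventually_splitNorm {N : c00 → ℝ} (hN : IsSchlumprechtNorm N) {x : ℕ → c00}
    (hx : ∀ n, N (x n) = 1) :
    ∃ ψ : ℕ → ℕ, StrictMono ψ ∧ ∃ L : ℕ → ℝ, ∀ d, ∀ᶠ j in Filter.atTop,
      L d / 2 ≤ splitNorm N d (x (ψ j)) ∧ splitNorm N d (x (ψ j)) ≤ 2 * L d := by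
  have hle (d n : ℕ) : splitNorm N d (x n) ≤ flog d := by simpa [hx] using hN.splitNorm_le d (x n)
  have hcompact : IsCompact (Set.univ.pi fun d : ℕ => Set.Icc 0 (flog d)) :=
    isCompact_univ_pi fun d => isCompact_Icc
  obtain ⟨L, -, ψ, hψ, hlim⟩ := hcompact.tendsto_subseq (x := fun n d => splitNorm N d (x n))
    fun n d _ => ⟨hN.splitNorm_nonneg d _, hle d n⟩
  rw [tendsto_pi_nhds] at hlim
  refine ⟨ψ, hψ, L, fun d => ?_⟩
  rcases d.eq_zero_or_pos with rfl | hd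
  · have hzero (n) : splitNorm N 0 (x n) = 0 :=
      le_antisymm ((hle 0 n).trans_eq (by simp [flog_zero])) (hN.splitNorm_nonneg 0 _)
    have hL : L 0 = 0 := by
      refine tendsto_nhds_unique (hlim 0) ?_
      simp [hzero]
    simp [hzero, hL]
  · have hL : 1 ≤ L d := ge_of_tendsto' (hlim d) fun j =>
      (hx (ψ j)).symm.trans_le (hN.le_splitNorm hd _)
    filter_upwards [(hlim d).eventually_const_le (show L d / 2 < L d by linarith),
      (hlim d).eventually_le_const (show L d < 2 * L d by linarith)] with j h₁ h₂
    exact ⟨h₁, h₂⟩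

lemma exists_strictMono_le_and_le_succ (H G : ℕ → ℕ) :
    ∃ z : ℕ → ℕ, StrictMono z ∧ (∀ n, H n ≤ z n) ∧ ∀ n, G (z n) ≤ z (n + 1) := by
  let z : ℕ → ℕ := fun n => n.rec (H 0) fun n zn => max (zn + 1) (max (H (n + 1)) (G zn))
  have hz (n) : z (n + 1) = max (z n + 1) (max (H (n + 1)) (G (z n))) := rfl
  refine ⟨z, strictMono_nat_of_lt_succ fun n => ?_, fun n => ?_, fun n => ?_⟩
  · rw [hz]; omega
  · cases n with
    | zero => exact le_rfl
    | succ n => rw [hz]; omega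
  · rw [hz]; omega

lemma sum_range_comp_le_sum_range (f : ℕ → ℕ) {φ : ℕ → ℕ} (hφ : StrictMono φ) (i : ℕ) :
    ∑ j ∈ Finset.range (i + 1), f (φ j) ≤ ∑ j ∈ Finset.range (φ i + 1), f j := by
  rw [← Finset.sum_image (f := f) hφ.injective.injOn]
  refine Finset.sum_le_sum_of_subset (Finset.image_subset_iff.2 fun j hj => ?_)
  exact Finset.mem_range_succ_iff.2 (hφ.monotone (Finset.mem_range_succ_iff.1 hj))

lemma IsBlockSeq.exists_stabilized_subseq {N : c00 → ℝ} (hN : IsSchlumprechtNorm N) {x : ℕ → c00}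
    (hx : IsBlockSeq x) (hxn : ∀ n, N (x n) = 1) (k : ℕ → ℕ) :
    ∃ φ : ℕ → ℕ, StrictMono φ ∧ ∃ M L δ, 0 < δ ∧ Stabilized N (fun i => x (φ i)) M L ∧
      GrowthDichotomy k M L δ := by
  obtain ⟨ψ, hψ, L, hL⟩ := exists_subseq_eventually_splitNorm hN hxn
  choose J hJ using fun m => Filter.eventually_atTop.1 <|
    (Filter.eventually_all_finset (Finset.range (m + 1))).2 fun d _ => hL d
  obtain ⟨h, δ, hδ, hgrowth⟩ := exists_growthDichotomy k L
  let σ : ℕ → ℕ := fun n => ∑ j ∈ Finset.range (n + 1), (x (ψ j)).support.card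
  -- The thresholds `M i = z (2 * i)` and indices `φ i = z (2 * i + 1)` are chosen alternately:
  -- `φ i` late enough for `M i`, and `M (i + 1)` large enough for the supports up to `φ i`.
  obtain ⟨z, hz, hhz, hGz⟩ :=
    exists_strictMono_le_and_le_succ (fun n => h (n / 2)) fun n => max (J n) (2 ^ σ n)
  have hφ : StrictMono fun i => z (2 * i + 1) := fun i j hij => hz (by omega)
  have hnear {i j d : ℕ} (hij : i ≤ j) (hd : d ≤ z (2 * i)) :=
    hJ (z (2 * i)) (z (2 * j + 1))
      (((le_max_left _ _).trans (hGz (2 * i))).trans (hφ.monotone hij)) d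
      (Finset.mem_range_succ_iff.2 hd)
  refine ⟨fun i => ψ (z (2 * i + 1)), hψ.comp hφ, fun i => z (2 * i), L, δ, hδ,
    { successive := hx.successive.comp (hψ.comp hφ)
      norm_eq_one := fun _ => hxn _
      strictMono := fun i j hij => hz (by omega)
      half_le_splitNorm := fun i j d hij hd => (hnear hij hd).1
      splitNorm_le_two_mul := fun i j d hij hd => (hnear hij hd).2
      sum_card_support_le := ?_ },
    hgrowth _ fun i => by simpa using hhz (2 * i)⟩
  rintro (_ | i)
  · simpa using flog_natCast_nonneg _
  · calc ((∑ j ∈ Finset.range (i + 1), (x (ψ (z (2 * j + 1)))).support.card : ℕ) : ℝ)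
        ≤ σ (z (2 * i + 1)) :=
          Nat.cast_le.2 (sum_range_comp_le_sum_range (fun j => (x (ψ j)).support.card) hφ i)
      _ ≤ flog (2 ^ σ (z (2 * i + 1)) : ℕ) := le_flog_two_pow _
      _ ≤ flog (z (2 * (i + 1))) :=
          flog_natCast_le_flog ((le_max_right _ _).trans (hGz (2 * i + 1)))

/-- `c`-equivalence of sequences; `SeqEquiv N u v` holds when such a `c ≥ 1` exists. -/
def EquivWith (N : c00 → ℝ) (c : ℝ) (u v : ℕ → c00) : Prop :=
  ∀ a : ℕ →₀ ℝ,
    (1 / c) * N (a.sum fun i t => t • u i) ≤ N (a.sum fun i t => t • v i) ∧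
    N (a.sum fun i t => t • v i) ≤ c * N (a.sum fun i t => t • u i)

lemma EquivWith.of_norm_blockSum_le {N : c00 → ℝ} {c : ℝ} {u v : ℕ → c00} (hc : 0 < c)
    (huv : ∀ a A, N (blockSum u a A) ≤ c * N (blockSum v a A))
    (hvu : ∀ a A, N (blockSum v a A) ≤ c * N (blockSum u a A)) : EquivWith N c u v := by
  refine fun a => ⟨?_, hvu a a.support⟩
  rw [one_div, inv_mul_le_iff₀ hc]
  exact huv a a.support

lemma Stabilized.exists_equivWith {N : c00 → ℝ} (hN : IsSchlumprechtNorm N) {y : ℕ → c00}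
    {k M : ℕ → ℕ} {L : ℕ → ℝ} {δ : ℝ} (hy : Stabilized N y M L) (hL : GrowthDichotomy k M L δ)
    (hδ : 0 < δ) :
    ∃ c : ℝ, 1 ≤ c ∧ ∀ s t : ℕ → ℕ, StrictMono s → StrictMono t →
      (∀ i, s i ≤ k i) → (∀ i, t i ≤ k i) →
      EquivWith N c (fun i => y (s i)) (fun i => y (t i)) := by
  obtain ⟨D, hD, hdom⟩ := hN.exists_norm_blockSum_le
  have hC : 1 ≤ 4 + 4 / δ := by linarith [div_pos four_pos hδ]
  have hc : 1 ≤ D * (4 + 4 / δ) := one_le_mul_of_one_le_of_one_le hD hC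
  have hle {s t : ℕ → ℕ} (hs : StrictMono s) (ht : StrictMono t) (htk : ∀ i, t i ≤ k i) :=
    hdom hC (hy.successive.comp hs) (hy.successive.comp ht) (fun _ => hy.norm_eq_one _)
      (fun _ => hy.norm_eq_one _) (hy.splitDominates hN hL hδ hs ht htk)
  exact ⟨_, hc, fun s t hs ht hsk htk =>
    .of_norm_blockSum_le (zero_lt_one.trans_le hc) (hle ht hs hsk) (hle hs ht htk)⟩

theorem subsequence_stabilization_general
    (N : c00 → ℝ) (hN : IsSchlumprechtNorm N)
    (x : ℕ → c00) (hx : IsBlockSeq x) (hxn : ∀ n, N (x n) = 1)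
    (k : ℕ → ℕ) :
    ∃ φ : ℕ → ℕ, StrictMono φ ∧ ∃ c : ℝ, 1 ≤ c ∧
      ∀ s t : ℕ → ℕ, StrictMono s → StrictMono t →
        (∀ i, s i ≤ k i) → (∀ i, t i ≤ k i) →
        EquivWith N c (fun i => x (φ (s i))) (fun i => x (φ (t i))) := by
  obtain ⟨φ, hφ, M, L, δ, hδ, hy, hL⟩ := hx.exists_stabilized_subseq hN hxn k
  exact ⟨φ, hφ, hy.exists_equivWith hN hL hδ⟩

/-- Theorem 3.2: Every normalized block sequence `(x_i)` has,
for any strictly increasing `(k_i)`, a subsequence `(y_i) = (x_{φ i})` such that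
whenever `(s_i)`, `(t_i)` are strictly increasing with `s_i, t_i ≤ k_i`, the
sequences `(y_{s_i})` and `(y_{t_i})` are equivalent. -/
theorem subsequence_stabilization
    (N : c00 → ℝ) (hN : IsSchlumprechtNorm N)
    (x : ℕ → c00) (hx : IsBlockSeq x) (hxn : ∀ n, N (x n) = 1)
    (k : ℕ → ℕ) (hk : StrictMono k) :
    ∃ φ : ℕ → ℕ, StrictMono φ ∧
      ∀ s t : ℕ → ℕ, StrictMono s → StrictMono t →
        (∀ i, s i ≤ k i) → (∀ i, t i ≤ k i) →
        SeqEquiv N (fun i => x (φ (s i))) (fun i => x (φ (t i))) := by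
  obtain ⟨φ, hφ, c, hc, h⟩ := subsequence_stabilization_general N hN x hx hxn k
  exact ⟨φ, hφ, fun s t hs ht hsk htk => ⟨c, hc, h s t hs ht hsk htk⟩⟩
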